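/- arXiv:1506.06002 — 4 statements merged into one kernel-verified Lean document; each statement's English description precedes it below -/
import Mathlib

section
/- Every element of the sister group Γ_s^(7) can be written as ε·W, where ε ∈ {1,−1} and W is a finite product of the matrices I₀ = [[0,0,i/√7],[0,1,0],[i√7,0,0]], R₁ = [[1,0,0],[0,−1,0],[0,0,1]], R₂ = [[1,1,iω₇/√7],[0,−1,1],[0,0,1]], R₃ = [[1,ω̄₇,−1],[0,−1,ω₇],[0,0,1]], T = [[1,0,i/√7],[0,1,0],[0,0,1]] and their inverses, where ω₇ = (1+i√7)/2. In other words, Γ_s^(7) is generated, modulo scalar matrices ±I, by I₀, R₁, R₂, R₃, T. -/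
noncomputable section

open Matrix

/-- The Hermitian form matrix `J`. -/
def matJ : Matrix (Fin 3) (Fin 3) ℂ := !![0,0,1; 0,1,0; 1,0,0]

/-- Membership in `U(2,1;J)`. -/
def inU21 (M : Matrix (Fin 3) (Fin 3) ℂ) : Prop := IsUnit M ∧ Mᴴ * matJ * M = matJ

/-- `i√7`. -/
def isq7 : ℂ := Complex.I * (Real.sqrt 7 : ℂ)

/-- `ω₇ = (1 + i√7)/2`. -/
def ω₇ : ℂ := (1 + Complex.I * (Real.sqrt 7 : ℂ)) / 2

/-- Membership in the ring of integers `O₇ = ℤ + ℤ·ω₇`. -/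
def inO7 (z : ℂ) : Prop := ∃ a b : ℤ, z = (a : ℂ) + (b : ℂ) * ω₇

/-- The sister group `Γ_s^(7)`. -/
def GammaS7 (M : Matrix (Fin 3) (Fin 3) ℂ) : Prop :=
  inU21 M ∧ inO7 (M 0 0) ∧ inO7 (M 0 1) ∧ inO7 (M 1 1) ∧ inO7 (M 1 2) ∧
    inO7 (M 2 2) ∧ inO7 (isq7 * M 0 2) ∧ inO7 (M 1 0 / isq7) ∧
    inO7 (M 2 0 / isq7) ∧ inO7 (M 2 1 / isq7)

def I₀ : Matrix (Fin 3) (Fin 3) ℂ :=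
  !![0, 0, Complex.I / (Real.sqrt 7 : ℂ); 0, 1, 0; Complex.I * (Real.sqrt 7 : ℂ), 0, 0]

def R₁ : Matrix (Fin 3) (Fin 3) ℂ := !![1,0,0; 0,-1,0; 0,0,1]

def R₂ : Matrix (Fin 3) (Fin 3) ℂ :=
  !![1, 1, Complex.I * ω₇ / (Real.sqrt 7 : ℂ); 0, -1, 1; 0, 0, 1]

def R₃ : Matrix (Fin 3) (Fin 3) ℂ :=
  !![1, (starRingEnd ℂ) ω₇, -1; 0, -1, ω₇; 0, 0, 1]

def T : Matrix (Fin 3) (Fin 3) ℂ :=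
  !![1, 0, Complex.I / (Real.sqrt 7 : ℂ); 0, 1, 0; 0, 0, 1]

namespace GS7

lemma sq7 : (Real.sqrt 7 : ℂ) * (Real.sqrt 7 : ℂ) = 7 := by
  rw [← Complex.ofReal_mul, Real.mul_self_sqrt (by norm_num)]; norm_num

lemma s7ne : (Real.sqrt 7 : ℂ) ≠ 0 := by
  intro h; have := sq7; rw [h] at this; norm_num at this

lemma isq7_sq : isq7 * isq7 = -7 := by
  unfold isq7; linear_combination Complex.I * Complex.I * sq7 + 7 * Complex.I_mul_I

lemma isq7_ne : isq7 ≠ 0 := by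
  intro h; have := isq7_sq; rw [h] at this; norm_num at this

lemma om_eq : ω₇ = (1 + isq7) / 2 := rfl

lemma om_sq : ω₇ * ω₇ = ω₇ - 2 := by
  rw [om_eq]; linear_combination (1/4 : ℂ) * isq7_sq

lemma isq7_om : isq7 = 2 * ω₇ - 1 := by rw [om_eq]; ring

lemma star_isq7 : (starRingEnd ℂ) isq7 = - isq7 := by simp [isq7]

lemma star_om : (starRingEnd ℂ) ω₇ = 1 - ω₇ := by
  rw [om_eq, map_div₀, map_add, star_isq7, map_one, map_ofNat]; ring

lemma i_div : Complex.I / (Real.sqrt 7 : ℂ) = - (1 / isq7) := by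
  have h := s7ne
  unfold isq7
  field_simp
  simp

lemma add' {x y : ℂ} (hx : inO7 x) (hy : inO7 y) : inO7 (x + y) := by
  obtain ⟨a, b, rfl⟩ := hx
  obtain ⟨c, d, rfl⟩ := hy
  exact ⟨a + c, b + d, by push_cast; ring⟩

lemma mul' {x y : ℂ} (hx : inO7 x) (hy : inO7 y) : inO7 (x * y) := by
  obtain ⟨a, b, rfl⟩ := hx
  obtain ⟨c, d, rfl⟩ := hy
  exact ⟨a * c - 2 * b * d, a * d + b * c + b * d, by
    push_cast; linear_combination (b * d : ℂ) * om_sq⟩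

lemma int' (n : ℤ) : inO7 n := ⟨n, 0, by simp⟩
lemma zero' : inO7 0 := by simpa using int' 0
lemma one' : inO7 1 := by simpa using int' 1
lemma om' : inO7 ω₇ := ⟨0, 1, by simp⟩
lemma neg' {x : ℂ} (hx : inO7 x) : inO7 (-x) := by
  simpa using mul' (int' (-1)) hx
lemma th' : inO7 isq7 := ⟨-1, 2, by rw [isq7_om]; push_cast; ring⟩

lemma gmul {M N : Matrix (Fin 3) (Fin 3) ℂ} (hM : GammaS7 M) (hN : GammaS7 N) :
    GammaS7 (M * N) := by
  obtain ⟨⟨u1, f1⟩, a1, a2, a3, a4, a5, a6, a7, a8, a9⟩ := hM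
  obtain ⟨⟨u2, f2⟩, b1, b2, b3, b4, b5, b6, b7, b8, b9⟩ := hN
  have hne := isq7_ne
  have ht := th'
  refine ⟨⟨u1.mul u2, ?_⟩, ?_, ?_, ?_, ?_, ?_, ?_, ?_, ?_, ?_⟩
  · rw [conjTranspose_mul]
    calc Nᴴ * Mᴴ * matJ * (M * N) = Nᴴ * (Mᴴ * matJ * M) * N := by simp only [Matrix.mul_assoc]
      _ = matJ := by rw [f1, f2]
  all_goals simp only [Matrix.mul_apply, Fin.sum_univ_three]
  · convert add' (add' (mul' a1 b1) (mul' ht (mul' a2 b7))) (mul' a6 b8) using 1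
    field_simp
  · convert add' (add' (mul' a1 b2) (mul' a2 b3)) (mul' a6 b9) using 1
    field_simp
  · convert add' (add' (mul' ht (mul' a7 b2)) (mul' a3 b3)) (mul' ht (mul' a4 b9)) using 1
    field_simp
  · convert add' (add' (mul' a7 b6) (mul' a3 b4)) (mul' a4 b5) using 1
    field_simp
  · convert add' (add' (mul' a8 b6) (mul' ht (mul' a9 b4))) (mul' a5 b5) using 1
    field_simp
  · convert add' (add' (mul' a1 b6) (mul' ht (mul' a2 b4))) (mul' a6 b5) using 1
    field_simp
  · convert add' (add' (mul' a7 b1) (mul' a3 b7)) (mul' a4 b8) using 1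
    field_simp
  · convert add' (add' (mul' a8 b1) (mul' ht (mul' a9 b7))) (mul' a5 b8) using 1
    field_simp
  · convert add' (add' (mul' a8 b2) (mul' a9 b3)) (mul' a5 b9) using 1
    field_simp

/-- The words, up to sign. -/
def P (M : Matrix (Fin 3) (Fin 3) ℂ) : Prop :=
  ∃ (ε : ℂ) (L : List (Matrix (Fin 3) (Fin 3) ℂ)),
      (ε = 1 ∨ ε = -1) ∧
      (∀ A ∈ L, A ∈ ({I₀, R₁, R₂, R₃, T, I₀⁻¹, R₁⁻¹, R₂⁻¹, R₃⁻¹, T⁻¹} :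
        Set (Matrix (Fin 3) (Fin 3) ℂ))) ∧
      M = ε • L.prod

lemma Pmul {M N : Matrix (Fin 3) (Fin 3) ℂ} (hM : P M) (hN : P N) : P (M * N) := by
  obtain ⟨e, L, he, hL, rfl⟩ := hM
  obtain ⟨f, K, hf, hK, rfl⟩ := hN
  refine ⟨e * f, L ++ K, ?_, ?_, ?_⟩
  · rcases he with rfl | rfl <;> rcases hf with rfl | rfl <;> simp
  · intro A hA
    rcases List.mem_append.1 hA with h | h
    · exact hL A h
    · exact hK A h
  · rw [List.prod_append, smul_mul_smul_comm]

lemma Pgen {A : Matrix (Fin 3) (Fin 3) ℂ}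
    (hA : A ∈ ({I₀, R₁, R₂, R₃, T, I₀⁻¹, R₁⁻¹, R₂⁻¹, R₃⁻¹, T⁻¹} :
        Set (Matrix (Fin 3) (Fin 3) ℂ))) : P A :=
  ⟨1, [A], Or.inl rfl, by simpa using hA, by simp⟩

lemma gone : GammaS7 1 := by
  refine ⟨⟨isUnit_one, by simp⟩, ?_⟩
  simp [one', zero']

/-- The group of good units. -/
def G : Subgroup (Matrix (Fin 3) (Fin 3) ℂ)ˣ where
  carrier := {u | (GammaS7 u.1 ∧ P u.1) ∧ (GammaS7 (u⁻¹).1 ∧ P (u⁻¹).1)}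
  mul_mem' := by
    rintro a b ⟨⟨h1, h2⟩, h3, h4⟩ ⟨⟨k1, k2⟩, k3, k4⟩
    refine ⟨⟨?_, ?_⟩, ?_, ?_⟩
    · exact gmul h1 k1
    · exact Pmul h2 k2
    · rw [_root_.mul_inv_rev]; exact gmul k3 h3
    · rw [_root_.mul_inv_rev]; exact Pmul k4 h4
  one_mem' := by
    have : P 1 := ⟨1, [], Or.inl rfl, by simp, by simp⟩
    simp [gone, this]
  inv_mem' := by
    rintro a ⟨h1, h2⟩
    exact ⟨h2, by simpa using h1⟩

lemma mem_of {A B : Matrix (Fin 3) (Fin 3) ℂ} (hAB : A * B = 1) (gA : GammaS7 A)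
    (gB : GammaS7 B) (pA : P A) (pB : B = A⁻¹ → P B) : ∃ u ∈ G, u.1 = A ∧ (u⁻¹).1 = B := by
  refine ⟨⟨A, B, hAB, mul_eq_one_comm.1 hAB⟩, ⟨⟨gA, pA⟩, gB, pB ?_⟩, rfl, rfl⟩
  exact (Matrix.inv_eq_right_inv hAB).symm

lemma ginv {A B : Matrix (Fin 3) (Fin 3) ℂ} (hAB : A * B = 1) (h : Aᴴ * matJ * A = matJ) :
    inU21 A ∧ inU21 B := by
  refine ⟨⟨IsUnit.of_mul_eq_one B hAB, h⟩,
    IsUnit.of_mul_eq_one A (mul_eq_one_comm.1 hAB), ?_⟩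
  have h2 : Bᴴ * Aᴴ = 1 := by rw [← conjTranspose_mul, hAB]; simp
  calc Bᴴ * matJ * B = Bᴴ * (Aᴴ * matJ * A) * B := by rw [h]
    _ = (Bᴴ * Aᴴ) * matJ * (A * B) := by simp only [Matrix.mul_assoc]
    _ = matJ := by rw [h2, hAB]; simp

lemma T_eq : T = !![1, 0, -(1 / isq7); 0, 1, 0; 0, 0, 1] := by
  unfold T; rw [i_div]

lemma I0_eq : I₀ = !![0, 0, -(1 / isq7); 0, 1, 0; isq7, 0, 0] := by
  unfold I₀; rw [i_div]; rfl

lemma R2_eq : R₂ = !![1, 1, -(ω₇ / isq7); 0, -1, 1; 0, 0, 1] := by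
  have : Complex.I * ω₇ / (Real.sqrt 7 : ℂ) = -(ω₇ / isq7) := by
    rw [mul_div_right_comm, i_div]; ring
  unfold R₂; rw [this]

lemma R3_eq : R₃ = !![1, 1 - ω₇, -1; 0, -1, ω₇; 0, 0, 1] := by
  unfold R₃; rw [star_om]

lemma T_mem : ∃ u ∈ G, u.1 = T ∧ (u⁻¹).1 = !![1, 0, (1 / isq7); 0, 1, 0; 0, 0, 1] := by
  have hne := isq7_ne
  have h1 : T * !![1, 0, (1 / isq7); 0, 1, 0; 0, 0, 1] = 1 := by
    rw [T_eq]; ext i j; fin_cases i <;> fin_cases j <;> simp [Matrix.mul_apply, Fin.sum_univ_three]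
  have h2 : Tᴴ * matJ * T = matJ := by
    rw [T_eq]; ext i j
    fin_cases i <;> fin_cases j <;>
      simp [Matrix.mul_apply, Fin.sum_univ_three, matJ, star_isq7]
  have h3 := ginv h1 h2
  refine mem_of h1 ⟨h3.1, ?_⟩ ⟨h3.2, ?_⟩ (Pgen (by simp)) (fun h => Pgen (by rw [h]; simp))
  · rw [T_eq]; simp [one', zero', neg', hne]
  · simp [one', zero', neg', hne]

lemma I0_mem : ∃ u ∈ G, u.1 = I₀ ∧ (u⁻¹).1 = !![0, 0, (1 / isq7); 0, 1, 0; -isq7, 0, 0] := by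
  have hne := isq7_ne
  have h1 : I₀ * !![0, 0, (1 / isq7); 0, 1, 0; -isq7, 0, 0] = 1 := by
    rw [I0_eq]; ext i j
    fin_cases i <;> fin_cases j <;> simp [Matrix.mul_apply, Fin.sum_univ_three, hne]
  have h2 : I₀ᴴ * matJ * I₀ = matJ := by
    rw [I0_eq]; ext i j
    fin_cases i <;> fin_cases j <;>
      simp [Matrix.mul_apply, Fin.sum_univ_three, matJ, star_isq7, hne]
  have h3 := ginv h1 h2
  refine mem_of h1 ⟨h3.1, ?_⟩ ⟨h3.2, ?_⟩ (Pgen (by simp)) (fun h => Pgen (by rw [h]; simp))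
  · rw [I0_eq]; simp [one', zero', neg', hne]
  · simp [one', zero', neg', hne, neg_div]

lemma R1_mem : ∃ u ∈ G, u.1 = R₁ ∧ (u⁻¹).1 = R₁ := by
  have h1 : R₁ * R₁ = 1 := by
    ext i j; fin_cases i <;> fin_cases j <;> simp [Matrix.mul_apply, Fin.sum_univ_three, R₁]
  have h2 : R₁ᴴ * matJ * R₁ = matJ := by
    ext i j
    fin_cases i <;> fin_cases j <;>
      simp [Matrix.mul_apply, Fin.sum_univ_three, matJ, R₁]
  have h3 := ginv h1 h2
  refine mem_of h1 ⟨h3.1, ?_⟩ ⟨h3.2, ?_⟩ (Pgen (by simp)) (fun h => Pgen (by simp))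
  · simp [R₁, one', zero', neg']
  · simp [R₁, one', zero', neg']

lemma R2_mem : ∃ u ∈ G, u.1 = R₂ ∧ (u⁻¹).1 = !![1, 1, (1 - ω₇) / isq7; 0, -1, 1; 0, 0, 1] := by
  have hne := isq7_ne
  have h4 : inO7 (1 - ω₇) := by simpa [sub_eq_add_neg] using add' one' (neg' om')
  have h1 : R₂ * !![1, 1, (1 - ω₇) / isq7; 0, -1, 1; 0, 0, 1] = 1 := by
    rw [R2_eq]
    ext i j; fin_cases i <;> fin_cases j <;> simp [Matrix.mul_apply, Fin.sum_univ_three]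
    field_simp
    rw [isq7_om]; ring
  have h2 : R₂ᴴ * matJ * R₂ = matJ := by
    rw [R2_eq]
    ext i j
    fin_cases i <;> fin_cases j <;>
      simp [Matrix.mul_apply, Fin.sum_univ_three, matJ, star_om, star_isq7]
    field_simp
    rw [isq7_om]; ring
  have h3 := ginv h1 h2
  refine mem_of h1 ⟨h3.1, ?_⟩ ⟨h3.2, ?_⟩ (Pgen (by simp)) (fun h => Pgen (by rw [h]; simp))
  · rw [R2_eq]; simp [one', zero', neg', hne, om', mul_div_cancel₀]
  · simp [one', zero', neg', hne, h4, mul_div_cancel₀]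

lemma R3_mem : ∃ u ∈ G, u.1 = R₃ ∧ (u⁻¹).1 = R₃ := by
  have h1 : R₃ * R₃ = 1 := by
    rw [R3_eq]
    ext i j; fin_cases i <;> fin_cases j <;> simp [Matrix.mul_apply, Fin.sum_univ_three]
    linear_combination -om_sq
  have h2 : R₃ᴴ * matJ * R₃ = matJ := by
    rw [R3_eq]
    ext i j
    fin_cases i <;> fin_cases j <;>
      simp [Matrix.mul_apply, Fin.sum_univ_three, matJ, star_om]
    linear_combination -om_sq
  have h3 := ginv h1 h2
  have h4 : inO7 (1 - ω₇) := by simpa [sub_eq_add_neg] using add' one' (neg' om')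
  refine mem_of h1 ⟨h3.1, ?_⟩ ⟨h3.2, ?_⟩ (Pgen (by simp)) (fun h => Pgen (by simp))
  · rw [R3_eq]; simp [one', zero', neg', om', h4, th']
  · rw [R3_eq]; simp [one', zero', neg', om', h4, th']

/-- Unitriangular shape. -/
def Sh (M : Matrix (Fin 3) (Fin 3) ℂ) (t : ℂ) : Prop :=
  M 0 0 = 1 ∧ M 1 0 = 0 ∧ M 1 1 = 1 ∧ M 1 2 = t ∧ M 2 0 = 0 ∧ M 2 1 = 0 ∧ M 2 2 = 1

lemma Sh_mul {M N : Matrix (Fin 3) (Fin 3) ℂ} {s t : ℂ} (hM : Sh M s) (hN : Sh N t) :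
    Sh (M * N) (s + t) := by
  obtain ⟨a1, a2, a3, a4, a5, a6, a7⟩ := hM
  obtain ⟨b1, b2, b3, b4, b5, b6, b7⟩ := hN
  simp [Sh, Matrix.mul_apply, Fin.sum_univ_three, *, add_comm]

lemma Sh_inv {M N : Matrix (Fin 3) (Fin 3) ℂ} {s : ℂ} (h : M * N = 1) (hM : Sh M s) :
    Sh N (-s) := by
  obtain ⟨a1, a2, a3, a4, a5, a6, a7⟩ := hM
  have e := fun i j => congrFun (congrFun h i) j
  simp only [Matrix.mul_apply, Fin.sum_univ_three] at e
  have e20 := e 2 0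
  have e21 := e 2 1
  have e22 := e 2 2
  have e10 := e 1 0
  have e11 := e 1 1
  have e12 := e 1 2
  have e00 := e 0 0
  simp [*] at e20 e21 e22
  simp [*] at e10 e11 e12
  simp [*] at e00
  exact ⟨e00, e10, e11, by linear_combination e12, e20, e21, e22⟩

lemma Sh_zpow {t : ℂ} (h : ∃ u ∈ G, Sh u.1 t) (n : ℤ) : ∃ u ∈ G, Sh u.1 (n * t) := by
  obtain ⟨u, hu, hs⟩ := h
  have hi : Sh (u⁻¹).1 (-t) := Sh_inv (by simp) hs
  induction n using Int.induction_on with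
  | zero => exact ⟨1, G.one_mem, by simp [Sh]⟩
  | succ k ih =>
    obtain ⟨v, hv, h2⟩ := ih
    refine ⟨v * u, G.mul_mem hv hu, ?_⟩
    rw [Units.val_mul]
    convert Sh_mul h2 hs using 1
    push_cast; ring
  | pred k ih =>
    obtain ⟨v, hv, h2⟩ := ih
    refine ⟨v * u⁻¹, G.mul_mem hv (G.inv_mem hu), ?_⟩
    rw [Units.val_mul]
    convert Sh_mul h2 hi using 1
    push_cast; ring

lemma trans_mem {t : ℂ} (h : inO7 t) : ∃ u ∈ G, Sh u.1 t := by
  obtain ⟨a, b, rfl⟩ := h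
  obtain ⟨r1, m1, e1, -⟩ := R1_mem
  obtain ⟨r2, m2, e2, -⟩ := R2_mem
  obtain ⟨r3, m3, e3, -⟩ := R3_mem
  have h2 : ∃ u ∈ G, Sh u.1 1 := by
    refine ⟨r2 * r1, G.mul_mem m2 m1, ?_⟩
    rw [Units.val_mul, e2, e1]
    simp [Sh, R₂, R₁, Matrix.mul_apply, Fin.sum_univ_three]
  have h3 : ∃ u ∈ G, Sh u.1 ω₇ := by
    refine ⟨r3 * r1, G.mul_mem m3 m1, ?_⟩
    rw [Units.val_mul, e3, e1]
    simp [Sh, R₃, R₁, Matrix.mul_apply, Fin.sum_univ_three]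
  obtain ⟨u, hu, hu'⟩ := Sh_zpow h2 a
  obtain ⟨v, hv, hv'⟩ := Sh_zpow h3 b
  refine ⟨u * v, G.mul_mem hu hv, ?_⟩
  simpa using Sh_mul hu' hv'

lemma T_zpow (n : ℤ) : ∃ u ∈ G, u.1 = !![1, 0, n / isq7; 0, 1, 0; 0, 0, 1] := by
  obtain ⟨u, hu, e1, e2⟩ := T_mem
  rw [T_eq] at e1
  induction n using Int.induction_on with
  | zero =>
    refine ⟨1, G.one_mem, ?_⟩
    ext i j; fin_cases i <;> fin_cases j <;> simp
  | succ k ih =>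
    obtain ⟨v, hv, h2⟩ := ih
    refine ⟨v * u⁻¹, G.mul_mem hv (G.inv_mem hu), ?_⟩
    rw [Units.val_mul, h2, e2]
    ext i j; fin_cases i <;> fin_cases j <;> simp [Matrix.mul_apply, Fin.sum_univ_three]
    ring
  | pred k ih =>
    obtain ⟨v, hv, h2⟩ := ih
    refine ⟨v * u, G.mul_mem hv hu, ?_⟩
    rw [Units.val_mul, h2, e1]
    ext i j; fin_cases i <;> fin_cases j <;> simp [Matrix.mul_apply, Fin.sum_univ_three]
    ring

lemma neg_mem : (-1 : (Matrix (Fin 3) (Fin 3) ℂ)ˣ) ∈ G := by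
  have h1 : GammaS7 (-1) := by
    refine ⟨⟨isUnit_one.neg, by simp⟩, ?_⟩
    simp [one', zero', neg']
  have h2 : P (-1) := ⟨-1, [], Or.inr rfl, by simp, by simp⟩
  have h3 : ((-1 : (Matrix (Fin 3) (Fin 3) ℂ)ˣ)⁻¹) = -1 := by simp
  refine ⟨⟨h1, h2⟩, ?_⟩
  rw [h3]; exact ⟨h1, h2⟩

lemma norm_int {z : ℂ} (h : inO7 z) : ∃ n : ℕ, Complex.normSq z = n := by
  obtain ⟨a, b, rfl⟩ := h
  have h7 : Real.sqrt 7 * Real.sqrt 7 = 7 := Real.mul_self_sqrt (by norm_num)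
  have h0 : 0 ≤ a ^ 2 + a * b + 2 * b ^ 2 := by nlinarith [sq_nonneg (2 * a + b), sq_nonneg b]
  obtain ⟨n, hn⟩ := Int.eq_ofNat_of_zero_le h0
  refine ⟨n, ?_⟩
  have : ((n : ℤ) : ℝ) = ((a ^ 2 + a * b + 2 * b ^ 2 : ℤ) : ℝ) := by rw [hn]
  have h3 : (n : ℝ) = a ^ 2 + a * b + 2 * b ^ 2 := by exact_mod_cast this
  rw [h3, Complex.normSq_apply]
  simp [ω₇]
  linear_combination (b ^ 2 / 4 : ℝ) * h7

lemma unit_pm {z : ℂ} (h : inO7 z) (h1 : Complex.normSq z = 1) : z = 1 ∨ z = -1 := by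
  obtain ⟨a, b, rfl⟩ := h
  have h7 : Real.sqrt 7 * Real.sqrt 7 = 7 := Real.mul_self_sqrt (by norm_num)
  have h3 : ((a ^ 2 + a * b + 2 * b ^ 2 : ℤ) : ℝ) = (1 : ℤ) := by
    push_cast
    rw [← h1, Complex.normSq_apply]
    simp [ω₇]
    linear_combination -(b ^ 2 / 4 : ℝ) * h7
  have h4 : a ^ 2 + a * b + 2 * b ^ 2 = 1 := by exact_mod_cast h3
  have hb : b = 0 := by
    have : b ^ 2 < 1 := by nlinarith [sq_nonneg (2 * a + b)]
    nlinarith [sq_nonneg b, pow_eq_zero_iff (two_ne_zero) |>.1 (show b ^ 2 = 0 by nlinarith [sq_nonneg b])]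
  subst hb
  have : a = 1 ∨ a = -1 := by
    have : (a - 1) * (a + 1) = 0 := by linarith
    rcases mul_eq_zero.1 this with h | h
    · left; linarith
    · right; linarith
  rcases this with rfl | rfl <;> simp

lemma round_zeta (z : ℂ) : ∃ t, inO7 t ∧ Complex.normSq (z + t) ≤ 13 / 20 := by
  have h7 : Real.sqrt 7 * Real.sqrt 7 = 7 := Real.mul_self_sqrt (by norm_num)
  have hs : Real.sqrt 7 ≠ 0 := by positivity
  obtain ⟨b, y, hy, hy1, hy2⟩ : ∃ (b : ℤ) (y : ℝ), z.im + b * (Real.sqrt 7 / 2) = y * Real.sqrt 7 ∧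
      -(1/4) ≤ y ∧ y ≤ 1/4 := by
    have h := abs_le.1 (abs_sub_round (2 * z.im / Real.sqrt 7))
    refine ⟨-round (2 * z.im / Real.sqrt 7),
      z.im / Real.sqrt 7 - round (2 * z.im / Real.sqrt 7) / 2, ?_, ?_, ?_⟩
    · push_cast; field_simp; ring
    · have e : 2 * z.im / Real.sqrt 7 = 2 * (z.im / Real.sqrt 7) := by ring
      rw [e] at h ⊢; linarith [h.1]
    · have e : 2 * z.im / Real.sqrt 7 = 2 * (z.im / Real.sqrt 7) := by ring
      rw [e] at h ⊢; linarith [h.2]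
  obtain ⟨a, x, hx, hx1, hx2⟩ : ∃ (a : ℤ) (x : ℝ), z.re + b / 2 + a = x ∧
      -(1/2) ≤ x ∧ x ≤ 1/2 := by
    have h := abs_le.1 (abs_sub_round (z.re + b / 2))
    exact ⟨-round (z.re + b / 2), _, rfl, by push_cast; linarith [h.1], by push_cast; linarith [h.2]⟩
  have key : ∀ c d : ℤ, Complex.normSq (z + (((a + c : ℤ) : ℂ) + ((b + d : ℤ) : ℂ) * ω₇)) =
      (x + c + d / 2) ^ 2 + 7 * (y + d / 2) ^ 2 := by
    intro c d
    rw [Complex.normSq_apply]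
    have e1 : (z + (((a + c : ℤ) : ℂ) + ((b + d : ℤ) : ℂ) * ω₇)).re = x + c + d / 2 := by
      simp [ω₇]; linear_combination hx
    have e2 : (z + (((a + c : ℤ) : ℂ) + ((b + d : ℤ) : ℂ) * ω₇)).im = (y + d / 2) * Real.sqrt 7 := by
      simp [ω₇]; linear_combination hy
    rw [e1, e2]
    linear_combination (y + d / 2) ^ 2 * h7
  suffices ∃ c d : ℤ, (x + c + d / 2) ^ 2 + 7 * (y + d / 2) ^ 2 ≤ 13 / 20 by
    obtain ⟨c, d, h⟩ := this
    exact ⟨_, ⟨a + c, b + d, rfl⟩, by rw [key]; exact h⟩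
  by_cases h0 : x ^ 2 + 7 * y ^ 2 ≤ 13 / 20
  · exact ⟨0, 0, by simpa using h0⟩
  push Not at h0
  have main : ∀ X Y : ℝ, 0 ≤ X → X ≤ 1/2 → 0 ≤ Y → Y ≤ 1/4 → 13 / 20 < X ^ 2 + 7 * Y ^ 2 →
      (X - 1/2) ^ 2 + 7 * (Y - 1/2) ^ 2 ≤ 13 / 20 := by
    intro X Y h1 h2 h3 h4 h5
    have q1 : X ^ 2 ≤ X / 2 := by nlinarith
    have q2 : Y ^ 2 ≤ Y / 4 := by nlinarith
    have q3 : 23 / 100 ≤ Y := by nlinarith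
    nlinarith
  rcases le_total 0 x with hx0 | hx0 <;> rcases le_total 0 y with hy0 | hy0
  · refine ⟨0, -1, ?_⟩
    have := main x y hx0 hx2 hy0 hy2 h0
    push_cast; nlinarith
  · refine ⟨-1, 1, ?_⟩
    have := main x (-y) hx0 hx2 (by linarith) (by linarith) (by simpa using h0)
    push_cast; nlinarith
  · refine ⟨1, -1, ?_⟩
    have := main (-x) y (by linarith) (by linarith) hy0 hy2 (by simpa using h0)
    push_cast; nlinarith
  · refine ⟨0, 1, ?_⟩
    have := main (-x) (-y) (by linarith) (by linarith) (by linarith) (by linarith) (by simpa using h0)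
    push_cast; nlinarith

lemma form {M : Matrix (Fin 3) (Fin 3) ℂ} (h : GammaS7 M) (i j : Fin 3) :
    star (M 0 i) * M 2 j + star (M 1 i) * M 1 j + star (M 2 i) * M 0 j = matJ i j := by
  have := congrFun (congrFun h.1.2 i) j
  rw [← this]
  simp [Matrix.mul_apply, Fin.sum_univ_three, matJ]
  ring

/-- The final descent predicate. -/
def W (M : Matrix (Fin 3) (Fin 3) ℂ) : Prop := ∃ u ∈ G, u.1 = M

lemma W_of {M : Matrix (Fin 3) (Fin 3) ℂ} {u : (Matrix (Fin 3) (Fin 3) ℂ)ˣ} (hu : u ∈ G)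
    (h : W (u.1 * M)) : W M := by
  obtain ⟨v, hv, e⟩ := h
  refine ⟨u⁻¹ * v, G.mul_mem (G.inv_mem hu) hv, ?_⟩
  rw [Units.val_mul, e, ← mul_assoc]; simp

lemma base4 {M : Matrix (Fin 3) (Fin 3) ℂ} (h : GammaS7 M) (h0 : Sh M 0) : W M := by
  obtain ⟨a1, a2, a3, a4, a5, a6, a7⟩ := h0
  have e12 := form h 1 2
  have e22 := form h 2 2
  simp [matJ, *] at e12 e22
  obtain ⟨a, b, hab⟩ := h.2.2.2.2.2.2.1
  have hne := isq7_ne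
  have hc := congrArg (starRingEnd ℂ) hab
  simp only [map_mul, map_add, star_isq7, star_om, map_intCast] at hc
  have hb : (b : ℂ) * isq7 = 0 := by
    rw [isq7_om] at *
    linear_combination -hab + hc + (2 * ω₇ - 1) * e22
  have hb0 : (b : ℂ) = 0 := by
    rcases mul_eq_zero.1 hb with h | h
    · exact h
    · exact absurd h hne
  obtain ⟨u, hu, hu'⟩ := T_zpow a
  refine ⟨u, hu, ?_⟩
  rw [hu']
  have : M 0 2 = a / isq7 := by
    rw [hb0] at hab
    field_simp
    linear_combination hab
  ext i j; fin_cases i <;> fin_cases j <;> simp [*]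

lemma base3 {M : Matrix (Fin 3) (Fin 3) ℂ} {t : ℂ} (h : GammaS7 M) (h0 : Sh M t) : W M := by
  have ht : inO7 t := by rw [← h0.2.2.2.1]; exact h.2.2.2.2.1
  obtain ⟨u, hu, hs⟩ := trans_mem (neg' ht)
  refine W_of hu (base4 (gmul hu.1.1 h) ?_)
  simpa using Sh_mul hs h0

lemma base2 {M : Matrix (Fin 3) (Fin 3) ℂ} (h : GammaS7 M) (h0 : M 2 0 = 0) (h2 : M 2 2 = 1) :
    W M := by
  have e00 := form h 0 0
  have e01 := form h 0 1
  have e02 := form h 0 2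
  have e11 := form h 1 1
  simp [matJ, h0, h2] at e00 e01 e02 e11
  have h10 := e00
  simp [h10] at e01 e02
  replace e02 : M 0 0 = 1 := by
    have := congrArg (starRingEnd ℂ) e02
    simpa using this
  simp [e02] at e01
  simp [e01] at e11
  have n11 : Complex.normSq (M 1 1) = 1 := by
    have := Complex.mul_conj (M 1 1)
    rw [mul_comm, e11] at this
    exact_mod_cast this.symm
  rcases unit_pm h.2.2.2.1 n11 with h11 | h11
  · exact base3 (t := M 1 2) h ⟨e02, h10, h11, rfl, h0, e01, h2⟩
  · obtain ⟨r, hr, e, -⟩ := R1_mem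
    refine W_of hr (base3 (t := -M 1 2) (gmul hr.1.1 h) ?_)
    rw [e]
    simp [Sh, R₁, Matrix.mul_apply, Fin.sum_univ_three, *]

lemma base {M : Matrix (Fin 3) (Fin 3) ℂ} (h : GammaS7 M) (h0 : M 2 0 = 0) : W M := by
  have e00 := form h 0 0
  have e02 := form h 0 2
  simp [matJ, h0] at e00 e02
  simp [e00] at e02
  have n : Complex.normSq (M 0 0) * Complex.normSq (M 2 2) = 1 := by
    have := congrArg Complex.normSq e02
    simpa using this
  obtain ⟨p, hp⟩ := norm_int h.2.1
  obtain ⟨q, hq⟩ := norm_int h.2.2.2.2.2.1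
  rw [hp, hq] at n
  have n' : p * q = 1 := by exact_mod_cast n
  have hq1 : Complex.normSq (M 2 2) = 1 := by rw [hq, Nat.eq_one_of_mul_eq_one_left n']; simp
  rcases unit_pm h.2.2.2.2.2.1 hq1 with h22 | h22
  · exact base2 h h0 h22
  · refine W_of neg_mem (base2 (gmul neg_mem.1.1 h) ?_ ?_) <;> simp [*]

lemma step {M : Matrix (Fin 3) (Fin 3) ℂ} (h : GammaS7 M) (h0 : M 2 0 ≠ 0) :
    ∃ u ∈ G, Complex.normSq ((u.1 * M) 2 0) < Complex.normSq (M 2 0) := by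
  have h7 : Real.sqrt 7 * Real.sqrt 7 = 7 := Real.mul_self_sqrt (by norm_num)
  have hs : Real.sqrt 7 ≠ 0 := by positivity
  obtain ⟨t, ht, hn⟩ := round_zeta (M 1 0 / M 2 0)
  obtain ⟨u, hu, a1, a2, a3, a4, a5, a6, a7⟩ := trans_mem ht
  set N := u.1 * M with hN
  have gN : GammaS7 N := gmul hu.1.1 h
  have N20 : N 2 0 = M 2 0 := by simp [hN, Matrix.mul_apply, Fin.sum_univ_three, *]
  have N10 : N 1 0 = M 1 0 + t * M 2 0 := by simp [hN, Matrix.mul_apply, Fin.sum_univ_three, *]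
  set c := M 2 0 with hc
  set k := round (Real.sqrt 7 * (N 0 0 / c).im) with hk
  obtain ⟨v, hv, ev⟩ := T_zpow k
  obtain ⟨w, hw, ew, -⟩ := I0_mem
  set K := v.1 * N with hK
  have gK : GammaS7 K := gmul hv.1.1 gN
  have K20 : K 2 0 = c := by
    rw [← N20, hK, ev, Matrix.mul_apply]; simp [Fin.sum_univ_three]
  have K10 : K 1 0 = M 1 0 + t * c := by
    rw [← N10, hK, ev, Matrix.mul_apply]; simp [Fin.sum_univ_three]
  have K00 : K 0 0 = N 0 0 + k / isq7 * c := by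
    rw [← N20, hK, ev, Matrix.mul_apply]; simp [Fin.sum_univ_three]
  refine ⟨w * v * u, G.mul_mem (G.mul_mem hw hv) hu, ?_⟩
  have e : (w * v * u).1 * M = w.1 * K := by
    simp only [Units.val_mul, hK, hN, mul_assoc]
  have e20 : (w.1 * K) 2 0 = isq7 * K 0 0 := by
    rw [ew, I0_eq]; simp [Matrix.mul_apply, Fin.sum_univ_three]
  have f00 := form gK 0 0
  set x := K 0 0 / c with hx
  set y := K 1 0 / c with hy
  have hxc : K 0 0 = x * c := by rw [hx]; field_simp
  have hyc : K 1 0 = y * c := by rw [hy]; field_simp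
  have hyn : Complex.normSq y ≤ 13 / 20 := by
    convert hn using 2
    rw [hy, K10]; field_simp
  have hcn : 0 < Complex.normSq c := Complex.normSq_pos.2 h0
  have hre : 2 * x.re + Complex.normSq y = 0 := by
    rw [hxc, hyc, K20] at f00
    simp [matJ] at f00
    have f2 : (star c * c) * (star x + star y * y + x) = 0 := by
      simp only [Complex.star_def]; linear_combination f00
    have f3 : star x + star y * y + x = 0 := by
      rcases mul_eq_zero.1 f2 with h | h
      · simp [h0] at h
      · exact h
    have := congrArg Complex.re f3
    simp at this
    rw [Complex.normSq_apply]; linarith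
  have him : x.im = (N 0 0 / c).im - k / Real.sqrt 7 := by
    have : x = N 0 0 / c + ((-(k / Real.sqrt 7) : ℝ) : ℂ) * Complex.I := by
      rw [hx, K00, add_div, mul_div_cancel_right₀ _ h0]
      congr 1
      have := i_div
      push_cast
      linear_combination (k : ℂ) * i_div
    rw [this]; simp; ring
  have him2 : 7 * x.im ^ 2 ≤ 1 / 4 := by
    have h := abs_sub_round (Real.sqrt 7 * (N 0 0 / c).im)
    rw [← hk] at h
    have e : Real.sqrt 7 * (N 0 0 / c).im - k = Real.sqrt 7 * x.im := by
      rw [him]; field_simp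
    rw [e] at h
    have := sq_le_sq' (abs_le.1 h).1 (abs_le.1 h).2
    nlinarith
  have hxn : 7 * Complex.normSq x < 1 := by
    rw [Complex.normSq_apply]
    have := Complex.normSq_nonneg y
    nlinarith
  rw [e, e20, hxc, map_mul, map_mul]
  have : Complex.normSq isq7 = 7 := by
    simp [isq7, Complex.normSq_apply]
  rw [this]
  nlinarith

lemma all_W (n : ℕ) : ∀ M : Matrix (Fin 3) (Fin 3) ℂ, GammaS7 M →
    Complex.normSq (M 2 0 / isq7) = n → W M := by
  induction n using Nat.strong_induction_on with
  | _ n ih =>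
    intro M h hn
    by_cases h0 : M 2 0 = 0
    · exact base h h0
    obtain ⟨u, hu, hlt⟩ := step h h0
    have g := gmul hu.1.1 h
    obtain ⟨m, hm⟩ := norm_int g.2.2.2.2.2.2.2.2.1
    refine W_of hu (ih m ?_ _ g hm)
    have hp : 0 < Complex.normSq isq7 := Complex.normSq_pos.2 isq7_ne
    have : (m : ℝ) < n := by
      rw [← hm, ← hn, map_div₀, map_div₀]
      exact div_lt_div_of_pos_right hlt hp
    exact_mod_cast this

end GS7


/-- `Γ_s^(7)` is generated, modulo `±I`, by `I₀, R₁, R₂, R₃, T`. -/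
theorem gammaS7_generated (M : Matrix (Fin 3) (Fin 3) ℂ) (hM : GammaS7 M) :
    ∃ (ε : ℂ) (L : List (Matrix (Fin 3) (Fin 3) ℂ)),
      (ε = 1 ∨ ε = -1) ∧
      (∀ A ∈ L, A ∈ ({I₀, R₁, R₂, R₃, T, I₀⁻¹, R₁⁻¹, R₂⁻¹, R₃⁻¹, T⁻¹} :
        Set (Matrix (Fin 3) (Fin 3) ℂ))) ∧
      M = ε • L.prod := by
  obtain ⟨n, hn⟩ := GS7.norm_int hM.2.2.2.2.2.2.2.2.1
  obtain ⟨u, hu, rfl⟩ := GS7.all_W n M hM hn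
  exact hu.1.2
end
end

section
/- Let H^(2) = Γ^(2) ∩ Γ_s^(2), and set g₁ = [[0,0,1],[0,−1,0],[1,0,0]] and g₂ = [[1,0,0],[−i√2,−1,0],[−1,i√2,1]]. Then Γ^(2) is the disjoint union of the three left cosets H^(2), g₁H^(2) and g₂H^(2); in particular these three cosets are pairwise disjoint and their union is all of Γ^(2). -/
noncomputable section

open Matrix

/-- `i√2`. -/
def isq2 : ℂ := Complex.I * (Real.sqrt 2 : ℂ)

/-- Membership in the ring of integers `O₂ = ℤ + ℤ·i√2`. -/
def inO2 (z : ℂ) : Prop := ∃ a b : ℤ, z = (a : ℂ) + (b : ℂ) * isq2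

/-- The Picard modular group `Γ^(2)` (as a set of matrices). -/
def GammaP2 : Set (Matrix (Fin 3) (Fin 3) ℂ) :=
  {M | inU21 M ∧ ∀ j k : Fin 3, inO2 (M j k)}

/-- The sister group `Γ_s^(2)` (as a set of matrices). -/
def GammaS2 : Set (Matrix (Fin 3) (Fin 3) ℂ) :=
  {M | inU21 M ∧ inO2 (M 0 0) ∧ inO2 (M 0 1) ∧ inO2 (M 1 1) ∧ inO2 (M 1 2) ∧
    inO2 (M 2 2) ∧ inO2 (isq2 * M 0 2) ∧ inO2 (M 1 0 / isq2) ∧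
    inO2 (M 2 0 / isq2) ∧ inO2 (M 2 1 / isq2)}

/-- `H^(2) = Γ^(2) ∩ Γ_s^(2)`. -/
def H2 : Set (Matrix (Fin 3) (Fin 3) ℂ) := GammaP2 ∩ GammaS2

def g₁ : Matrix (Fin 3) (Fin 3) ℂ := !![0,0,1; 0,-1,0; 1,0,0]

def g₂ : Matrix (Fin 3) (Fin 3) ℂ :=
  !![1, 0, 0;
     -(Complex.I * (Real.sqrt 2 : ℂ)), -1, 0;
     -1, Complex.I * (Real.sqrt 2 : ℂ), 1]


/-- Divisibility by `i√2` in `O₂`. -/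
def dvO2 (z : ℂ) : Prop := ∃ w, inO2 w ∧ z = isq2 * w

theorem isq2_sq : isq2 * isq2 = -2 := by
  have h : ((Real.sqrt 2 : ℝ) : ℂ) * (Real.sqrt 2 : ℝ) = 2 := by
    rw [← Complex.ofReal_mul, Real.mul_self_sqrt (by norm_num)]; norm_num
  unfold isq2
  linear_combination (Complex.I * Complex.I) * h + 2 * Complex.I_mul_I

theorem isq2_ne : isq2 ≠ 0 := by
  intro h
  have := isq2_sq
  rw [h] at this
  norm_num at this

theorem isq2_star : star isq2 = -isq2 := by
  simp [isq2]

theorem inO2_add {x y : ℂ} (hx : inO2 x) (hy : inO2 y) : inO2 (x + y) := by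
  obtain ⟨a, b, rfl⟩ := hx
  obtain ⟨c, d, rfl⟩ := hy
  exact ⟨a + c, b + d, by push_cast; ring⟩

theorem inO2_mul {x y : ℂ} (hx : inO2 x) (hy : inO2 y) : inO2 (x * y) := by
  obtain ⟨a, b, rfl⟩ := hx
  obtain ⟨c, d, rfl⟩ := hy
  exact ⟨a * c - 2 * b * d, a * d + b * c, by
    push_cast; linear_combination (b * d : ℂ) * isq2_sq⟩

theorem inO2_int (n : ℤ) : inO2 n := ⟨n, 0, by simp⟩

theorem inO2_isq2 : inO2 isq2 := ⟨0, 1, by simp⟩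

theorem inO2_neg {x : ℂ} (hx : inO2 x) : inO2 (-x) := by
  obtain ⟨a, b, rfl⟩ := hx
  exact ⟨-a, -b, by push_cast; ring⟩

theorem inO2_star {x : ℂ} (hx : inO2 x) : inO2 (star x) := by
  obtain ⟨a, b, rfl⟩ := hx
  refine ⟨a, -b, ?_⟩
  rw [star_add, star_mul', isq2_star]
  simp

theorem dvO2_add {x y : ℂ} (hx : dvO2 x) (hy : dvO2 y) : dvO2 (x + y) := by
  obtain ⟨a, ha, rfl⟩ := hx
  obtain ⟨c, hc, rfl⟩ := hy
  exact ⟨a + c, inO2_add ha hc, by ring⟩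

theorem dvO2_neg {x : ℂ} (hx : dvO2 x) : dvO2 (-x) := by
  obtain ⟨a, ha, rfl⟩ := hx
  exact ⟨-a, inO2_neg ha, by ring⟩

theorem dvO2_mul {x y : ℂ} (hx : dvO2 x) (hy : inO2 y) : dvO2 (x * y) := by
  obtain ⟨a, ha, rfl⟩ := hx
  exact ⟨a * y, inO2_mul ha hy, by ring⟩

theorem dvO2_star {x : ℂ} (hx : dvO2 x) : dvO2 (star x) := by
  obtain ⟨a, ha, rfl⟩ := hx
  exact ⟨-star a, inO2_neg (inO2_star ha), by rw [star_mul', isq2_star]; ring⟩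

theorem dvO2_div {x : ℂ} : inO2 (x / isq2) ↔ dvO2 x := by
  constructor
  · intro h
    exact ⟨_, h, by field_simp [isq2_ne]⟩
  · rintro ⟨w, hw, rfl⟩
    rwa [mul_div_cancel_left₀ _ isq2_ne]

theorem dvO2_isq2 : dvO2 isq2 := ⟨1, by exact_mod_cast inO2_int 1, by simp⟩

theorem dvO2_two : dvO2 2 := ⟨-isq2, inO2_neg inO2_isq2, by linear_combination isq2_sq⟩

theorem dvO2_or {x : ℂ} (hx : inO2 x) : dvO2 x ∨ dvO2 (x + 1) := by
  obtain ⟨a, b, rfl⟩ := hx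
  rcases Int.even_or_odd' a with ⟨k, rfl | rfl⟩
  · left
    exact ⟨b + (-k : ℤ) * isq2, ⟨b, -k, rfl⟩, by push_cast; linear_combination (k : ℂ) * isq2_sq⟩
  · right
    exact ⟨b + (-(k + 1) : ℤ) * isq2, ⟨b, -(k + 1), rfl⟩, by
      push_cast; linear_combination (k + 1 : ℂ) * isq2_sq⟩

theorem not_dvO2_one : ¬ dvO2 1 := by
  rintro ⟨w, ⟨a, b, rfl⟩, h⟩
  have h2 : (1 : ℂ) = ((-2 * b : ℤ) : ℂ) + a * isq2 := by
    push_cast; linear_combination h + (b : ℂ) * isq2_sq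
  have h3 := congrArg Complex.re h2
  simp [isq2] at h3
  have h5 : ((1 : ℤ) : ℝ) = ((-(2 * b) : ℤ) : ℝ) := by push_cast; exact h3
  have h4 : (1 : ℤ) = -(2 * b) := Int.cast_injective h5
  omega

theorem dvO2_prime {x y : ℂ} (hx : inO2 x) (hy : inO2 y) (h : dvO2 (x * y)) :
    dvO2 x ∨ dvO2 y := by
  rcases dvO2_or hx with h1 | h1
  · exact Or.inl h1
  · right
    have := dvO2_add (dvO2_mul h1 hy) (dvO2_neg h)
    convert this using 1
    ring

theorem dvO2_re {x : ℂ} (hx : inO2 x) : dvO2 (x + star x) := by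
  obtain ⟨a, b, rfl⟩ := hx
  have := dvO2_mul dvO2_two (inO2_int a)
  convert this using 1
  rw [star_add, star_mul', isq2_star]
  simp
  ring

theorem dvO2_of_star {x : ℂ} (h : dvO2 (star x)) : dvO2 x := by
  simpa using dvO2_star h

theorem GammaP2_col {M : Matrix (Fin 3) (Fin 3) ℂ} (hM : M ∈ GammaP2) :
    dvO2 (M 1 0) ∧ ¬ (dvO2 (M 0 0) ∧ dvO2 (M 2 0)) ∧ (dvO2 (M 2 0) → dvO2 (M 2 1)) := by
  obtain ⟨⟨-, hU⟩, hO⟩ := hM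
  have e0 := congrFun (congrFun hU 0) 0
  have e1 := congrFun (congrFun hU 0) 1
  have e2 := congrFun (congrFun hU 0) 2
  simp only [matJ, Matrix.mul_apply, Fin.sum_univ_three, Matrix.conjTranspose_apply,
    Matrix.of_apply, Matrix.cons_val] at e0 e1 e2
  have h10 : dvO2 (M 1 0) := by
    have h1 : dvO2 (star (M 1 0) * M 1 0) := by
      have := dvO2_neg (dvO2_re (inO2_mul (inO2_star (hO 0 0)) (hO 2 0)))
      convert this using 1
      rw [star_mul', star_star]
      linear_combination e0
    rcases dvO2_prime (inO2_star (hO 1 0)) (hO 1 0) h1 with h | h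
    · exact dvO2_of_star h
    · exact h
  have hn : ¬ (dvO2 (M 0 0) ∧ dvO2 (M 2 0)) := by
    rintro ⟨ha, hc⟩
    apply not_dvO2_one
    have := dvO2_add (dvO2_add (dvO2_mul (dvO2_star ha) (hO 2 2))
      (dvO2_mul (dvO2_star h10) (hO 1 2))) (dvO2_mul (dvO2_star hc) (hO 0 2))
    convert this using 1
    linear_combination -e2
  refine ⟨h10, hn, fun hc => ?_⟩
  have h1 : dvO2 (star (M 0 0) * M 2 1) := by
    have := dvO2_neg (dvO2_add (dvO2_mul (dvO2_star h10) (hO 1 1))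
      (dvO2_mul (dvO2_star hc) (hO 0 1)))
    convert this using 1
    linear_combination e1
  rcases dvO2_prime (inO2_star (hO 0 0)) (hO 2 1) h1 with h | h
  · exact absurd ⟨dvO2_of_star h, hc⟩ hn
  · exact h

theorem mem_H2_iff {M : Matrix (Fin 3) (Fin 3) ℂ} :
    M ∈ H2 ↔ M ∈ GammaP2 ∧ dvO2 (M 2 0) := by
  constructor
  · rintro ⟨h, h'⟩
    exact ⟨h, dvO2_div.1 h'.2.2.2.2.2.2.2.2.1⟩
  · rintro ⟨h, hc⟩
    obtain ⟨h10, -, h21⟩ := GammaP2_col h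
    exact ⟨h, h.1, h.2 _ _, h.2 _ _, h.2 _ _, h.2 _ _, h.2 _ _, inO2_mul inO2_isq2 (h.2 _ _),
      dvO2_div.2 h10, dvO2_div.2 hc, dvO2_div.2 (h21 hc)⟩

theorem GammaP2_mul {A B : Matrix (Fin 3) (Fin 3) ℂ} (hA : A ∈ GammaP2) (hB : B ∈ GammaP2) :
    A * B ∈ GammaP2 := by
  refine ⟨⟨hA.1.1.mul hB.1.1, ?_⟩, fun j k => ?_⟩
  · calc (A * B)ᴴ * matJ * (A * B) = Bᴴ * (Aᴴ * matJ * A) * B := by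
          rw [Matrix.conjTranspose_mul]; simp only [Matrix.mul_assoc]
      _ = matJ := by rw [hA.1.2, hB.1.2]
  · rw [Matrix.mul_apply, Fin.sum_univ_three]
    exact inO2_add (inO2_add (inO2_mul (hA.2 _ _) (hB.2 _ _)) (inO2_mul (hA.2 _ _) (hB.2 _ _)))
      (inO2_mul (hA.2 _ _) (hB.2 _ _))

theorem g₂_eq : g₂ = !![1, 0, 0; -isq2, -1, 0; -1, isq2, 1] := rfl

theorem g₁_sq : g₁ * g₁ = 1 := by
  ext i j
  fin_cases i <;> fin_cases j <;> simp [g₁, Matrix.mul_apply, Fin.sum_univ_three]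

theorem g₂_sq : g₂ * g₂ = 1 := by
  ext i j
  fin_cases i <;> fin_cases j <;>
    simp [g₂_eq, Matrix.mul_apply, Fin.sum_univ_three, isq2_sq] <;> norm_num

theorem inO2_zero : inO2 0 := by exact_mod_cast inO2_int 0

theorem inO2_one : inO2 1 := by exact_mod_cast inO2_int 1

theorem g₁_mem : g₁ ∈ GammaP2 := by
  refine ⟨⟨IsUnit.of_mul_eq_one _ g₁_sq, ?_⟩, fun i j => ?_⟩
  · ext i j
    fin_cases i <;> fin_cases j <;> simp [g₁, matJ, Matrix.mul_apply, Fin.sum_univ_three]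
  · fin_cases i <;> fin_cases j <;> simp [g₁, inO2_zero, inO2_one, inO2_neg inO2_one]

theorem g₂_mem : g₂ ∈ GammaP2 := by
  have hs : (starRingEnd ℂ) isq2 = -isq2 := isq2_star
  refine ⟨⟨IsUnit.of_mul_eq_one _ g₂_sq, ?_⟩, fun i j => ?_⟩
  · ext i j
    fin_cases i <;> fin_cases j <;>
      simp [g₂_eq, matJ, Matrix.mul_apply, Fin.sum_univ_three, hs, isq2_sq] <;> norm_num
  · fin_cases i <;> fin_cases j <;> simp [g₂_eq, inO2_zero, inO2_one, inO2_neg inO2_one,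
      inO2_isq2, inO2_neg inO2_isq2]

theorem mem_coset {g M : Matrix (Fin 3) (Fin 3) ℂ} (hg : g ∈ GammaP2) (hs : g * g = 1) :
    M ∈ (g * ·) '' H2 ↔ M ∈ GammaP2 ∧ dvO2 ((g * M) 2 0) := by
  constructor
  · rintro ⟨h, hh, rfl⟩
    rw [mem_H2_iff] at hh
    refine ⟨GammaP2_mul hg hh.1, ?_⟩
    simp only [← Matrix.mul_assoc, hs, Matrix.one_mul]
    exact hh.2
  · rintro ⟨h1, h2⟩
    refine ⟨g * M, mem_H2_iff.2 ⟨GammaP2_mul hg h1, h2⟩, ?_⟩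
    simp only [← Matrix.mul_assoc, hs, Matrix.one_mul]

theorem mem_coset₁ {M : Matrix (Fin 3) (Fin 3) ℂ} :
    M ∈ (g₁ * ·) '' H2 ↔ M ∈ GammaP2 ∧ dvO2 (M 0 0) := by
  rw [mem_coset g₁_mem g₁_sq]
  simp [g₁, Matrix.mul_apply, Fin.sum_univ_three]

theorem mem_coset₂ {M : Matrix (Fin 3) (Fin 3) ℂ} :
    M ∈ (g₂ * ·) '' H2 ↔ M ∈ GammaP2 ∧ dvO2 (M 0 0 + M 2 0) := by
  rw [mem_coset g₂_mem g₂_sq]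
  refine and_congr_right fun hM => ?_
  have e : (g₂ * M) 2 0 = -M 0 0 + isq2 * M 1 0 + M 2 0 := by
    simp [g₂_eq, Matrix.mul_apply, Fin.sum_univ_three]
  have hd : dvO2 (2 * M 0 0 + -(isq2 * M 1 0)) :=
    dvO2_add (dvO2_mul dvO2_two (hM.2 _ _)) (dvO2_neg (dvO2_mul dvO2_isq2 (hM.2 _ _)))
  rw [e]
  constructor
  · intro h
    convert dvO2_add h hd using 1
    ring
  · intro h
    convert dvO2_add h (dvO2_neg hd) using 1
    ring

/-- `Γ^(2)` is the disjoint union of the three left cosets `H^(2)`, `g₁H^(2)`, `g₂H^(2)`. -/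
theorem gammaP2_coset_decomposition :
    (GammaP2 = H2 ∪ (g₁ * ·) '' H2 ∪ (g₂ * ·) '' H2) ∧
    Disjoint H2 ((g₁ * ·) '' H2) ∧
    Disjoint H2 ((g₂ * ·) '' H2) ∧
    Disjoint ((g₁ * ·) '' H2) ((g₂ * ·) '' H2) := by
  have hsum : ∀ {x y : ℂ}, dvO2 x → dvO2 (x + y) → dvO2 y := by
    intro x y hx h
    convert dvO2_add h (dvO2_neg hx) using 1
    ring
  refine ⟨?_, ?_, ?_, ?_⟩
  · ext M
    rw [Set.mem_union, Set.mem_union, mem_H2_iff, mem_coset₁, mem_coset₂]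
    constructor
    · intro hM
      rcases dvO2_or (hM.2 0 0) with ha | ha
      · exact Or.inl (Or.inr ⟨hM, ha⟩)
      rcases dvO2_or (hM.2 2 0) with hc | hc
      · exact Or.inl (Or.inl ⟨hM, hc⟩)
      refine Or.inr ⟨hM, ?_⟩
      convert dvO2_add (dvO2_add ha hc) (dvO2_neg dvO2_two) using 1
      ring
    · rintro ((h | h) | h) <;> exact h.1
  · rw [Set.disjoint_left]
    intro M h h'
    rw [mem_H2_iff] at h
    rw [mem_coset₁] at h'
    exact (GammaP2_col h.1).2.1 ⟨h'.2, h.2⟩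
  · rw [Set.disjoint_left]
    intro M h h'
    rw [mem_H2_iff] at h
    rw [mem_coset₂] at h'
    exact (GammaP2_col h.1).2.1 ⟨hsum h.2 (by rw [add_comm]; exact h'.2), h.2⟩
  · rw [Set.disjoint_left]
    intro M h h'
    rw [mem_coset₁] at h
    rw [mem_coset₂] at h'
    exact (GammaP2_col h.1).2.1 ⟨h.2, hsum h.2 h'.2⟩
end
end

section
/- Fix d ∈ {7,11} and let H^(d) = Γ^(d) ∩ Γ_s^(d). Set g₁ = [[0,0,1],[0,−1,0],[1,0,0]], and for each integer k with 1 ≤ k ≤ (d−1)/2 set g_{2k} = [[1,0,0],[k,1,0],[−k²ω_d,−k,1]] and g_{2k+1} = [[1,0,0],[−k,1,0],[−k²ω_d,k,1]], where ω_d = (1+i√d)/2. Then Γ^(d) is the disjoint union of the d+1 left cosets H^(d), g₁H^(d), and g_mH^(d) for m = 2,…,d; in particular these cosets are pairwise disjoint and their union is all of Γ^(d). -/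
noncomputable section

open Matrix

/-- `i√d`. -/
def isqd (d : ℕ) : ℂ := Complex.I * (Real.sqrt d : ℂ)

/-- `ω_d = (1 + i√d)/2`. -/
def ωd (d : ℕ) : ℂ := (1 + Complex.I * (Real.sqrt d : ℂ)) / 2

/-- Membership in the ring of integers `O_d = ℤ + ℤ·ω_d` (for `d ≡ 3 mod 4`). -/
def inOd (d : ℕ) (z : ℂ) : Prop := ∃ a b : ℤ, z = (a : ℂ) + (b : ℂ) * ωd d

/-- The Picard modular group `Γ^(d)` (as a set of matrices). -/
def GammaPd (d : ℕ) : Set (Matrix (Fin 3) (Fin 3) ℂ) :=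
  {M | inU21 M ∧ ∀ j k : Fin 3, inOd d (M j k)}

/-- The sister group `Γ_s^(d)` (as a set of matrices). -/
def GammaSd (d : ℕ) : Set (Matrix (Fin 3) (Fin 3) ℂ) :=
  {M | inU21 M ∧ inOd d (M 0 0) ∧ inOd d (M 0 1) ∧ inOd d (M 1 1) ∧ inOd d (M 1 2) ∧
    inOd d (M 2 2) ∧ inOd d (isqd d * M 0 2) ∧ inOd d (M 1 0 / isqd d) ∧
    inOd d (M 2 0 / isqd d) ∧ inOd d (M 2 1 / isqd d)}

/-- `H^(d) = Γ^(d) ∩ Γ_s^(d)`. -/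
def Hd (d : ℕ) : Set (Matrix (Fin 3) (Fin 3) ℂ) := GammaPd d ∩ GammaSd d

/-- The coset representatives `g_m` for `Γ^(d)`: `g₀ = 1`, `g₁`, and for `1 ≤ k ≤ (d-1)/2`
the matrices `g_{2k}` and `g_{2k+1}`. -/
def gmat (d m : ℕ) : Matrix (Fin 3) (Fin 3) ℂ :=
  if m = 0 then 1
  else if m = 1 then !![0,0,1; 0,-1,0; 1,0,0]
  else if m % 2 = 0 then
    !![1, 0, 0;
       ((m / 2 : ℕ) : ℂ), 1, 0;
       -((m / 2 : ℕ) : ℂ)^2 * ωd d, -((m / 2 : ℕ) : ℂ), 1]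
  else
    !![1, 0, 0;
       -((m / 2 : ℕ) : ℂ), 1, 0;
       -((m / 2 : ℕ) : ℂ)^2 * ωd d, ((m / 2 : ℕ) : ℂ), 1]

/-- `z = a + b ω` has residue `r` modulo `i√d` (with `d + 1 = 4c`, so `ω ≡ 2c`). -/
def ResP (d c : ℕ) (z : ℂ) (r : ZMod d) : Prop :=
  ∃ a b : ℤ, z = (a : ℂ) + (b : ℂ) * ωd d ∧ r = (a : ZMod d) + (b : ZMod d) * (2 * (c : ZMod d))

lemma sqrt_sq_aux (d : ℕ) : ((Real.sqrt d : ℝ) : ℂ) ^ 2 = d := by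
  rw [← Complex.ofReal_pow, Real.sq_sqrt (Nat.cast_nonneg d)]; simp

lemma omega_sq {d c : ℕ} (h : d + 1 = 4 * c) : ωd d * ωd d = ωd d - c := by
  have h1 := sqrt_sq_aux d
  have h2 : (d : ℂ) + 1 = 4 * c := by exact_mod_cast h
  unfold ωd
  linear_combination (1/4 : ℂ) * (Real.sqrt d : ℂ)^2 * Complex.I_sq - (1/4 : ℂ) * h1 - (1/4 : ℂ) * h2

lemma four_c {d c : ℕ} (h : d + 1 = 4 * c) : (4 : ZMod d) * c = 1 := by
  have : ((d + 1 : ℕ) : ZMod d) = ((4 * c : ℕ) : ZMod d) := by rw [h]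
  push_cast at this
  simp at this
  exact this.symm

lemma isqd_eq (d : ℕ) : isqd d = 2 * ωd d - 1 := by unfold isqd ωd; ring

lemma isqd_ne {d : ℕ} (h : 0 < d) : isqd d ≠ 0 := by
  unfold isqd
  have : Real.sqrt d ≠ 0 := by positivity
  simp [this]

lemma ResP.unique {d c : ℕ} (hd : 0 < d) {z : ℂ} {r s : ZMod d} (h1 : ResP d c z r)
    (h2 : ResP d c z s) : r = s := by
  obtain ⟨a, b, h, rfl⟩ := h1
  obtain ⟨a', b', h', rfl⟩ := h2
  have hs : Real.sqrt d ≠ 0 := by positivity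
  rw [h] at h'
  have him := congrArg Complex.im h'
  have hre := congrArg Complex.re h'
  simp [ωd] at him hre
  have hb : b = b' := by
    rcases him with h | h
    · exact h
    · omega
  subst hb
  have ha : a = a' := by simpa using hre
  rw [ha]

lemma ResP.add {d c : ℕ} {z w : ℂ} {r s : ZMod d} (h1 : ResP d c z r)
    (h2 : ResP d c w s) : ResP d c (z + w) (r + s) := by
  obtain ⟨a, b, rfl, rfl⟩ := h1
  obtain ⟨a', b', rfl, rfl⟩ := h2
  exact ⟨a + a', b + b', by push_cast; ring, by push_cast; ring⟩

lemma ResP.neg {d c : ℕ} {z : ℂ} {r : ZMod d} (h1 : ResP d c z r) : ResP d c (-z) (-r) := by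
  obtain ⟨a, b, rfl, rfl⟩ := h1
  exact ⟨-a, -b, by push_cast; ring, by push_cast; ring⟩

lemma ResP.mul {d c : ℕ} (h : d + 1 = 4 * c) {z w : ℂ} {r s : ZMod d} (h1 : ResP d c z r)
    (h2 : ResP d c w s) : ResP d c (z * w) (r * s) := by
  obtain ⟨a, b, rfl, rfl⟩ := h1
  obtain ⟨a', b', rfl, rfl⟩ := h2
  refine ⟨a * a' - b * b' * c, a * b' + b * a' + b * b', ?_, ?_⟩
  · push_cast; linear_combination (b : ℂ) * b' * omega_sq h
  · push_cast; linear_combination (b : ZMod d) * b' * c * four_c h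

lemma ResP.star {d c : ℕ} (h : d + 1 = 4 * c) {z : ℂ} {r : ZMod d} (h1 : ResP d c z r) :
    ResP d c (star z) r := by
  obtain ⟨a, b, rfl, rfl⟩ := h1
  refine ⟨a + b, -b, ?_, ?_⟩
  · simp [ωd]; ring
  · push_cast; linear_combination (b : ZMod d) * four_c h

lemma ResP.int {d c : ℕ} (n : ℤ) : ResP d c (n : ℂ) (n : ZMod d) := ⟨n, 0, by simp, by simp⟩
lemma ResP.zero {d c : ℕ} : ResP d c 0 0 := by simpa using ResP.int (d := d) (c := c) 0
lemma ResP.one {d c : ℕ} : ResP d c 1 1 := by simpa using ResP.int (d := d) (c := c) 1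
lemma ResP.omega {d c : ℕ} : ResP d c (ωd d) (2 * c) := ⟨0, 1, by simp, by simp⟩
lemma ResP.inOd {d c : ℕ} {z : ℂ} {r : ZMod d} (h1 : ResP d c z r) : inOd d z := by
  obtain ⟨a, b, h, _⟩ := h1; exact ⟨a, b, h⟩
lemma inOd.res {d : ℕ} (c : ℕ) {z : ℂ} (h1 : inOd d z) : ∃ r, ResP d c z r := by
  obtain ⟨a, b, h⟩ := h1; exact ⟨_, a, b, h, rfl⟩

lemma ResP.div {d c : ℕ} (h : d + 1 = 4 * c) (hd : 0 < d) {z : ℂ} (h1 : ResP d c z 0) :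
    _root_.inOd d (z / isqd d) := by
  obtain ⟨a, b, rfl, hr⟩ := h1
  have h0 : ((a + b * (2 * c) : ℤ) : ZMod d) = 0 := by push_cast; exact hr.symm
  replace h0 := (ZMod.intCast_zmod_eq_zero_iff_dvd _ _).mp h0
  obtain ⟨t, ht⟩ := h0
  refine ⟨t, b - 2 * t, ?_⟩
  rw [div_eq_iff (isqd_ne hd), isqd_eq]
  have ht' : (a : ℂ) + b * (2 * c) = d * t := by exact_mod_cast ht
  have h2 : (d : ℂ) + 1 = 4 * c := by exact_mod_cast h
  push_cast
  linear_combination ht' + (t : ℂ) * h2 - (2 * (b - 2 * t) : ℂ) * omega_sq h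

lemma inOd.res_zero {d c : ℕ} (h : d + 1 = 4 * c) (hd : 0 < d) {z : ℂ}
    (h1 : inOd d (z / isqd d)) : ResP d c z 0 := by
  obtain ⟨u, v, huv⟩ := h1
  rw [div_eq_iff (isqd_ne hd), isqd_eq] at huv
  refine ⟨-u - 2 * v * c, 2 * u + v, ?_, ?_⟩
  · rw [huv]; push_cast; linear_combination (2 * v : ℂ) * omega_sq h
  · push_cast; linear_combination (-u : ZMod d) * four_c h

lemma inU21.mul {A B : Matrix (Fin 3) (Fin 3) ℂ} (hA : inU21 A) (hB : inU21 B) :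
    inU21 (A * B) := by
  refine ⟨hA.1.mul hB.1, ?_⟩
  rw [conjTranspose_mul]
  calc Bᴴ * Aᴴ * matJ * (A * B) = Bᴴ * (Aᴴ * matJ * A) * B := by simp only [Matrix.mul_assoc]
    _ = matJ := by rw [hA.2, hB.2]

lemma GammaPd_mul {d c : ℕ} (h : d + 1 = 4 * c) {A B : Matrix (Fin 3) (Fin 3) ℂ}
    (hA : A ∈ GammaPd d) (hB : B ∈ GammaPd d) : A * B ∈ GammaPd d := by
  refine ⟨hA.1.mul hB.1, fun j k => ?_⟩
  rw [Matrix.mul_apply, Fin.sum_univ_three]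
  have key : ∀ l, ∃ r, ResP d c (A j l * B l k) r := fun l => by
    obtain ⟨r, hr⟩ := (hA.2 j l).res c
    obtain ⟨s, hs⟩ := (hB.2 l k).res c
    exact ⟨_, hr.mul h hs⟩
  obtain ⟨r0, h0⟩ := key 0
  obtain ⟨r1, h1⟩ := key 1
  obtain ⟨r2, h2⟩ := key 2
  exact ((h0.add h1).add h2).inOd

/-- Entrywise form of the unitarity relation. -/
lemma inU21.entry {M : Matrix (Fin 3) (Fin 3) ℂ} (hM : inU21 M) (j k : Fin 3) :
    star (M 0 j) * M 2 k + star (M 1 j) * M 1 k + star (M 2 j) * M 0 k = matJ j k := by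
  have := congrFun (congrFun hM.2 j) k
  rw [← this]
  simp [Matrix.mul_apply, Fin.sum_univ_three, matJ]
  ring

/-- Residues of the entries satisfy the orthogonality relations. -/
lemma res_entry {d c : ℕ} (h : d + 1 = 4 * c) (hd : 0 < d) {M : Matrix (Fin 3) (Fin 3) ℂ}
    (hM : inU21 M) {j k : Fin 3} {x y z x' y' z' e : ZMod d}
    (hx : ResP d c (M 0 j) x) (hy : ResP d c (M 1 j) y) (hz : ResP d c (M 2 j) z)
    (hx' : ResP d c (M 0 k) x') (hy' : ResP d c (M 1 k) y') (hz' : ResP d c (M 2 k) z')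
    (he : ResP d c (matJ j k) e) : x * z' + y * y' + z * x' = e := by
  rw [← hM.entry j k] at he
  exact ((((hx.star h).mul h hz').add ((hy.star h).mul h hy')).add ((hz.star h).mul h hx')).unique
    hd he

lemma mem_Hd {d c : ℕ} [Fact d.Prime] (h : d + 1 = 4 * c) {M : Matrix (Fin 3) (Fin 3) ℂ}
    (hM : M ∈ GammaPd d) (h1 : ResP d c (M 1 0) 0) (h2 : ResP d c (M 2 0) 0) : M ∈ Hd d := by
  have hd : 0 < d := (Fact.out : d.Prime).pos
  have hR : ∀ j k, ∃ r, ResP d c (M j k) r := fun j k => (hM.2 j k).res c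
  choose r hr using hR
  have e1 := res_entry h hd hM.1 (hr 0 0) h1 h2 (hr 0 2) (hr 1 2) (hr 2 2)
    (e := 1) (by simpa [matJ] using ResP.one)
  have e2 := res_entry h hd hM.1 (hr 0 0) h1 h2 (hr 0 1) (hr 1 1) (hr 2 1)
    (e := 0) (by simpa [matJ] using ResP.zero)
  have e3 : r 2 1 = 0 := by linear_combination (r 2 2) * e2 - (r 2 1) * e1
  have h3 := hr 2 1
  rw [e3] at h3
  refine ⟨hM, hM.1, hM.2 _ _, hM.2 _ _, hM.2 _ _, hM.2 _ _, hM.2 _ _, ?_, h1.div h hd, h2.div h hd,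
    h3.div h hd⟩
  have hi : ResP d c (isqd d) (2 * (2 * c) + -1) := by
    rw [isqd_eq, sub_eq_add_neg]
    refine ResP.add (ResP.mul h ?_ ResP.omega) ResP.one.neg
    simpa using ResP.int (d := d) (c := c) 2
  exact (hi.mul h (hr 0 2)).inOd

/-- The lower unipotent matrix with slopeIdx `s` and corner `w`. -/
def lowL (s : ℤ) (w : ℂ) : Matrix (Fin 3) (Fin 3) ℂ :=
  !![1, 0, 0; (s : ℂ), 1, 0; -(s : ℂ)^2 * w, -(s : ℂ), 1]

/-- The slopeIdx attached to the index `m`. -/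
def slopeIdx (m : ℕ) : ℤ := if m % 2 = 0 then ((m / 2 : ℕ) : ℤ) else -((m / 2 : ℕ) : ℤ)

/-- The matrix `g₁`. -/
def gone : Matrix (Fin 3) (Fin 3) ℂ := !![0,0,1; 0,-1,0; 1,0,0]

lemma gmat_one (d : ℕ) : gmat d 1 = gone := by simp [gmat, gone]

lemma gmat_eq (d m : ℕ) (hm : m ≠ 1) : gmat d m = lowL (slopeIdx m) (ωd d) := by
  unfold gmat slopeIdx lowL
  by_cases h0 : m = 0
  · subst h0
    ext i j; fin_cases i <;> fin_cases j <;> simp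
  · by_cases h2 : m % 2 = 0
    · rw [if_neg h0, if_neg hm, if_pos h2, if_pos h2, Int.cast_natCast]
    · rw [if_neg h0, if_neg hm, if_neg h2, if_neg h2, Int.cast_neg, Int.cast_natCast, neg_neg, neg_sq]

lemma lowL_inv (s : ℤ) (w : ℂ) : lowL s w * lowL (-s) (1 - w) = 1 := by
  ext i j
  fin_cases i <;> fin_cases j <;> simp [lowL, Matrix.mul_apply, Fin.sum_univ_three]
  ring

lemma gone_mul : gone * gone = 1 := by
  ext i j
  fin_cases i <;> fin_cases j <;> simp [gone, Matrix.mul_apply, Fin.sum_univ_three]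

lemma lowL_mem {d c : ℕ} (h : d + 1 = 4 * c) (s : ℤ) {w : ℂ} {r : ZMod d} (hw : ResP d c w r)
    (hs : w + star w = 1) : lowL s w ∈ GammaPd d := by
  refine ⟨⟨IsUnit.of_mul_eq_one _ (lowL_inv s w), ?_⟩, ?_⟩
  · ext i j
    fin_cases i <;> fin_cases j <;>
      simp [lowL, matJ, Matrix.mul_apply, Fin.sum_univ_three]
    have : (starRingEnd ℂ) w = 1 - w := by
      rw [← hs]; simp
    rw [this]; ring
  · have hS : ResP d c (s : ℂ) (s : ZMod d) := ResP.int s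
    intro i j
    fin_cases i <;> fin_cases j <;> simp only [lowL] <;>
      simp
    · exact (ResP.one (c := c)).inOd
    · exact (ResP.zero (c := c)).inOd
    · exact (ResP.zero (c := c)).inOd
    · exact hS.inOd
    · exact (ResP.one (c := c)).inOd
    · exact (ResP.zero (c := c)).inOd
    · rw [sq]; exact ((hS.mul h hS).mul h hw).neg.inOd
    · exact hS.neg.inOd
    · exact (ResP.one (c := c)).inOd

lemma gone_mem (d : ℕ) : gone ∈ GammaPd d := by
  refine ⟨⟨IsUnit.of_mul_eq_one _ gone_mul, ?_⟩, ?_⟩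
  · ext i j
    fin_cases i <;> fin_cases j <;>
      simp [gone, matJ, Matrix.mul_apply, Fin.sum_univ_three]
  · have h0 : inOd d 0 := (ResP.zero (c := 0)).inOd
    have h1 : inOd d 1 := (ResP.one (c := 0)).inOd
    have h2 : inOd d (-1) := (ResP.one (c := 0)).neg.inOd
    intro i j
    fin_cases i <;> fin_cases j <;> simp [gone] <;> assumption

lemma omega_star (d : ℕ) : ωd d + star (ωd d) = 1 := by
  simp [ωd]; ring

lemma omega_star' (d : ℕ) : (1 - ωd d) + star (1 - ωd d) = 1 := by
  simp [ωd]; ring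

lemma gmat_mem {d c : ℕ} (h : d + 1 = 4 * c) (m : ℕ) : gmat d m ∈ GammaPd d := by
  by_cases hm : m = 1
  · subst hm; rw [gmat_one]; exact gone_mem d
  · rw [gmat_eq d m hm]; exact lowL_mem h _ ResP.omega (omega_star d)

/-- Residues of the first column of an element of `g_m H`. -/
lemma coset_res {d c : ℕ} [Fact d.Prime] (h : d + 1 = 4 * c) {m : ℕ}
    {M : Matrix (Fin 3) (Fin 3) ℂ} (hM : M ∈ (gmat d m * ·) '' Hd d) :
    ∃ l : ZMod d, l ≠ 0 ∧ (m = 1 → ResP d c (M 0 0) 0) ∧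
      (m ≠ 1 → ResP d c (M 0 0) l ∧ ResP d c (M 1 0) (slopeIdx m * l)) := by
  have hd : 0 < d := (Fact.out : d.Prime).pos
  obtain ⟨N, hN, rfl⟩ := hM
  have h1 : ResP d c (N 1 0) 0 := inOd.res_zero h hd hN.2.2.2.2.2.2.2.2.1
  have h2 : ResP d c (N 2 0) 0 := inOd.res_zero h hd hN.2.2.2.2.2.2.2.2.2.1
  have hR : ∀ j k, ∃ r, ResP d c (N j k) r := fun j k => (hN.1.2 j k).res c
  choose r hr using hR
  have e1 := res_entry h hd hN.1.1 (hr 0 0) h1 h2 (hr 0 2) (hr 1 2) (hr 2 2)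
    (e := 1) (by simpa [matJ] using ResP.one)
  refine ⟨r 0 0, ?_, ?_, ?_⟩
  · intro h0; rw [h0] at e1; simp at e1
  · rintro rfl
    simpa [gmat_one, gone, Matrix.mul_apply, Fin.sum_univ_three] using h2
  · intro hm
    have hS : ResP d c (slopeIdx m : ℂ) (slopeIdx m : ZMod d) := ResP.int _
    constructor
    · simpa [gmat_eq d m hm, lowL, Matrix.mul_apply, Fin.sum_univ_three] using hr 0 0
    · simpa [gmat_eq d m hm, lowL, Matrix.mul_apply, Fin.sum_univ_three] using
        (hS.mul h (hr 0 0)).add h1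

lemma cover {d c : ℕ} [Fact d.Prime] (h : d + 1 = 4 * c)
    (hsurj : ∀ t : ZMod d, ∃ m ∈ Finset.range (d + 1), m ≠ 1 ∧ (slopeIdx m : ZMod d) = t)
    {M : Matrix (Fin 3) (Fin 3) ℂ} (hM : M ∈ GammaPd d) :
    ∃ m ∈ Finset.range (d + 1), M ∈ (gmat d m * ·) '' Hd d := by
  have hd : 0 < d := (Fact.out : d.Prime).pos
  obtain ⟨x, hx⟩ := (hM.2 0 0).res c
  obtain ⟨y, hy⟩ := (hM.2 1 0).res c
  obtain ⟨z, hz⟩ := (hM.2 2 0).res c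
  have e := res_entry h hd hM.1 hx hy hz hx hy hz (e := 0) (by simpa [matJ] using ResP.zero)
  by_cases hx0 : x = 0
  · subst hx0
    have hy0 : y = 0 := by simpa using e
    subst hy0
    refine ⟨1, by simp; omega, gone * M, mem_Hd h (GammaPd_mul h (gone_mem d) hM) ?_ ?_, ?_⟩
    · simpa [gone, Matrix.mul_apply, Fin.sum_univ_three] using hy.neg
    · simpa [gone, Matrix.mul_apply, Fin.sum_univ_three] using hx
    · simp only [gmat_one]; rw [← Matrix.mul_assoc, gone_mul, Matrix.one_mul]
  · obtain ⟨m, hmr, hm, hs⟩ := hsurj (y / x)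
    have hsx : (slopeIdx m : ZMod d) * x = y := by rw [hs]; field_simp
    have hw : ResP d c (1 - ωd d) (1 + -(2 * c)) := by
      rw [sub_eq_add_neg]; exact ResP.one.add ResP.omega.neg
    have hS : ResP d c (slopeIdx m : ℂ) (slopeIdx m : ZMod d) := ResP.int _
    have h4 := four_c h
    refine ⟨m, hmr, lowL (-slopeIdx m) (1 - ωd d) * M,
      mem_Hd h (GammaPd_mul h (lowL_mem h _ hw (omega_star' d)) hM) ?_ ?_, ?_⟩
    · have := (hS.neg.mul h hx).add hy
      have e0 : -(slopeIdx m : ZMod d) * x + y = 0 := by rw [← hsx]; ring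
      rw [e0] at this
      simpa [lowL, Matrix.mul_apply, Fin.sum_univ_three] using this
    · have := ((((hS.mul h hS).mul h hw).neg.mul h hx).add (hS.mul h hy)).add hz
      have e0 : -((slopeIdx m : ZMod d) * slopeIdx m * (1 + -(2 * c))) * x + slopeIdx m * y + z = 0 := by
        have h2 : (2 * c : ZMod d) * 2 * x ≠ 0 := by
          intro hh; apply hx0; linear_combination hh - x * h4
        apply (mul_eq_zero.mp (?_ : (2 * c : ZMod d) * 2 * x * _ = 0)).resolve_left h2
        rw [← hsx] at e ⊢
        generalize (slopeIdx m : ZMod d) = t at *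
        linear_combination (2 * c) * e + (2 * c * t ^ 2 * x ^ 2) * h4
      rw [e0] at this
      simpa [lowL, Matrix.mul_apply, Fin.sum_univ_three, sq] using this
    · simp only [gmat_eq d m hm]
      rw [← Matrix.mul_assoc, lowL_inv, Matrix.one_mul]

lemma main_aux {d c : ℕ} [Fact d.Prime] (h : d + 1 = 4 * c)
    (hsurj : ∀ t : ZMod d, ∃ m ∈ Finset.range (d + 1), m ≠ 1 ∧ (slopeIdx m : ZMod d) = t)
    (hinj : ∀ m ∈ Finset.range (d + 1), ∀ n ∈ Finset.range (d + 1), m ≠ 1 → n ≠ 1 →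
      (slopeIdx m : ZMod d) = slopeIdx n → m = n) :
    (GammaPd d = ⋃ m ∈ Finset.range (d + 1), (gmat d m * ·) '' Hd d) ∧
      (∀ m ∈ Finset.range (d + 1), ∀ n ∈ Finset.range (d + 1), m ≠ n →
        Disjoint ((gmat d m * ·) '' Hd d) ((gmat d n * ·) '' Hd d)) := by
  have hd : 0 < d := (Fact.out : d.Prime).pos
  constructor
  · ext M
    simp only [Set.mem_iUnion, exists_prop]
    constructor
    · exact cover h hsurj
    · rintro ⟨m, _, N, hN, rfl⟩
      exact GammaPd_mul h (gmat_mem h m) hN.1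
  · intro m hm n hn hmn
    rw [Set.disjoint_left]
    intro M h1 h2
    obtain ⟨l, hl, a1, a2⟩ := coset_res h h1
    obtain ⟨l', hl', b1, b2⟩ := coset_res h h2
    by_cases hm1 : m = 1
    · by_cases hn1 : n = 1
      · omega
      · exact hl' ((b2 hn1).1.unique hd (a1 hm1))
    · by_cases hn1 : n = 1
      · exact hl ((a2 hm1).1.unique hd (b1 hn1))
      · have e1 := (a2 hm1).1.unique hd (b2 hn1).1
        have e2 := (a2 hm1).2.unique hd (b2 hn1).2
        rw [← e1] at e2
        exact hmn (hinj m hm n hn hm1 hn1 (mul_right_cancel₀ hl e2))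

lemma surj_seven : ∀ t : ZMod 7, ∃ m ∈ Finset.range (7 + 1),
    m ≠ 1 ∧ (slopeIdx m : ZMod 7) = t := by
  decide

lemma inj_seven : ∀ m ∈ Finset.range (7 + 1), ∀ n ∈ Finset.range (7 + 1),
    m ≠ 1 → n ≠ 1 → (slopeIdx m : ZMod 7) = slopeIdx n → m = n := by
  decide

lemma surj_eleven : ∀ t : ZMod 11, ∃ m ∈ Finset.range (11 + 1),
    m ≠ 1 ∧ (slopeIdx m : ZMod 11) = t := by
  decide

lemma inj_eleven : ∀ m ∈ Finset.range (11 + 1), ∀ n ∈ Finset.range (11 + 1),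
    m ≠ 1 → n ≠ 1 → (slopeIdx m : ZMod 11) = slopeIdx n → m = n := by
  decide

/-- For `d ∈ {7,11}`, `Γ^(d)` is the disjoint union of the `d+1` left cosets
`g_m H^(d)`, `m = 0, 1, …, d`. -/
theorem gammaPd_coset_decomposition :
    ∀ d ∈ ({7, 11} : Set ℕ),
      (GammaPd d = ⋃ m ∈ Finset.range (d + 1), (gmat d m * ·) '' Hd d) ∧
      (∀ m ∈ Finset.range (d + 1), ∀ n ∈ Finset.range (d + 1), m ≠ n →
        Disjoint ((gmat d m * ·) '' Hd d) ((gmat d n * ·) '' Hd d)) := by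
  intro d hd
  rcases hd with rfl | hd
  · have : Fact (Nat.Prime 7) := ⟨by norm_num⟩
    exact main_aux (c := 2) (by norm_num) surj_seven inj_seven
  · rw [Set.mem_singleton_iff] at hd
    subst hd
    have : Fact (Nat.Prime 11) := ⟨by norm_num⟩
    exact main_aux (c := 3) (by norm_num) surj_eleven inj_eleven
end
end

section
/- Every M ∈ Γ_s^(7) with M₂₁ = M₃₁ = 0 can be written as ε·W, where ε ∈ {1,−1} and W is a finite product of the matrices R₁ = [[1,0,0],[0,−1,0],[0,0,1]], R₂ = [[1,1,iω₇/√7],[0,−1,1],[0,0,1]], R₃ = [[1,ω̄₇,−1],[0,−1,ω₇],[0,0,1]], T = [[1,0,i/√7],[0,1,0],[0,0,1]] and their inverses, where ω₇ = (1+i√7)/2. In other words, the stabilizer of q_∞ in Γ_s^(7) is generated, modulo ±I, by R₁, R₂, R₃ and T. -/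
noncomputable section

open Matrix

open Matrix

theorem isq7_sq : isq7 * isq7 = -7 := by
  have h : ((Real.sqrt 7 : ℝ) : ℂ) * ((Real.sqrt 7 : ℝ) : ℂ) = 7 := by
    rw [← Complex.ofReal_mul, Real.mul_self_sqrt (by norm_num)]; norm_num
  unfold isq7
  linear_combination (Complex.I * Complex.I) * h + 7 * Complex.I_mul_I

theorem isq7_ne : isq7 ≠ 0 := by
  intro h
  have := isq7_sq
  rw [h] at this
  norm_num at this

theorem om_eq : ω₇ = (1 + isq7) / 2 := rfl

theorem conj_isq7 : (starRingEnd ℂ) isq7 = -isq7 := by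
  simp [isq7]

theorem conj_om : (starRingEnd ℂ) ω₇ = (1 - isq7) / 2 := by
  rw [om_eq, map_div₀, map_add, map_one, map_ofNat, conj_isq7]; ring

theorem I_div : Complex.I / (Real.sqrt 7 : ℂ) = isq7 / 7 := by
  have h : ((Real.sqrt 7 : ℝ) : ℂ) * ((Real.sqrt 7 : ℝ) : ℂ) = 7 := by
    rw [← Complex.ofReal_mul, Real.mul_self_sqrt (by norm_num)]; norm_num
  have h0 : ((Real.sqrt 7 : ℝ) : ℂ) ≠ 0 := by
    intro h'; rw [h'] at h; norm_num at h
  unfold isq7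
  rw [div_eq_div_iff h0 (by norm_num)]
  linear_combination (-Complex.I) * h

/-- Heisenberg translations with coordinates `e = x + y ω`, and vertical part given by `m`. -/
def NN (x y m : ℤ) : Matrix (Fin 3) (Fin 3) ℂ :=
  !![1, -((x : ℂ) + y * ((1 - isq7) / 2)),
      -((m : ℂ) - (x * x + x * y + 2 * y * y) * ((1 + isq7) / 2)) * isq7 / 7;
     0, 1, (x : ℂ) + y * ((1 + isq7) / 2); 0, 0, 1]

theorem NN_zero : NN 0 0 0 = 1 := by
  ext i j
  fin_cases i <;> fin_cases j <;> simp [NN]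

theorem NN_T (x y m : ℤ) : NN x y m * T = NN x y (m - 1) := by
  rw [T, I_div]
  ext i j
  fin_cases i <;> fin_cases j <;> simp [NN, Matrix.mul_apply, Fin.sum_univ_three]
  ring

theorem NN_A (x y m : ℤ) : NN x y m * (R₂ * R₁) = NN (x + 1) y (m + x - 3 * y) := by
  rw [R₂, R₁, mul_div_right_comm, I_div, om_eq]
  have h := isq7_sq
  ext i j
  fin_cases i <;> fin_cases j <;> simp [NN, Matrix.mul_apply, Fin.sum_univ_three]
  · ring
  · grind
  · ring

theorem NN_B (x y m : ℤ) :
    NN x y m * (R₃ * R₁) = NN x (y + 1) (m + 1 + 4 * x + 2 * y) := by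
  rw [R₃, R₁, conj_om, om_eq]
  have h := isq7_sq
  ext i j
  fin_cases i <;> fin_cases j <;> simp [NN, Matrix.mul_apply, Fin.sum_univ_three]
  · ring
  · grind
  · ring

theorem R1_sq : R₁ * R₁ = 1 := by
  ext i j
  fin_cases i <;> fin_cases j <;> simp [R₁]

theorem detR1 : IsUnit R₁.det := by simp [R₁, Matrix.det_fin_three]
theorem detR2 : IsUnit R₂.det := by simp [R₂, Matrix.det_fin_three]
theorem detR3 : IsUnit R₃.det := by simp [R₃, Matrix.det_fin_three]
theorem detT : IsUnit T.det := by simp [T, Matrix.det_fin_three]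

/-- Monoid generated by the generators and their inverses. -/
def GG : Submonoid (Matrix (Fin 3) (Fin 3) ℂ) :=
  Submonoid.closure {R₁, R₂, R₃, T, R₁⁻¹, R₂⁻¹, R₃⁻¹, T⁻¹}

theorem gen_mem {A : Matrix (Fin 3) (Fin 3) ℂ}
    (h : A ∈ ({R₁, R₂, R₃, T, R₁⁻¹, R₂⁻¹, R₃⁻¹, T⁻¹} :
        Set (Matrix (Fin 3) (Fin 3) ℂ))) : A ∈ GG := Submonoid.subset_closure h

theorem cancel {A B C D : Matrix (Fin 3) (Fin 3) ℂ} (hA : IsUnit A.det) (hi : A⁻¹ ∈ GG)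
    (hB : B⁻¹ ∈ GG) (hBd : IsUnit B.det) (h : C * (A * B) = D) (hD : D ∈ GG) : C ∈ GG := by
  have : C = D * (B⁻¹ * A⁻¹) := by
    rw [← h, ← Matrix.mul_inv_rev, Matrix.mul_nonsing_inv_cancel_right]
    rw [Matrix.det_mul]; exact hA.mul hBd
  rw [this]
  exact GG.mul_mem hD (GG.mul_mem hB hi)

theorem NN_mem0 (m : ℤ) : NN 0 0 m ∈ GG := by
  induction m using Int.induction_on with
  | zero => rw [NN_zero]; exact GG.one_mem
  | succ k ih =>
    refine cancel (A := T) (B := R₁ * R₁) detT (gen_mem (by simp)) ?_ ?_ ?_ ih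
    · rw [R1_sq, inv_one]; exact GG.one_mem
    · rw [R1_sq]; simp
    · rw [R1_sq, mul_one, NN_T]; simp
  | pred k ih =>
    rw [← NN_T]
    exact GG.mul_mem ih (gen_mem (by simp))

theorem NN_mem1 (y : ℤ) : ∀ m, NN 0 y m ∈ GG := by
  induction y using Int.induction_on with
  | zero => exact NN_mem0
  | succ k ih =>
    intro m
    have := NN_B 0 k (m - 1 - 2 * k)
    rw [show m - 1 - 2 * (k : ℤ) + 1 + 4 * 0 + 2 * k = m by ring] at this
    rw [← this]
    exact GG.mul_mem (ih _) (GG.mul_mem (gen_mem (by simp)) (gen_mem (by simp)))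
  | pred k ih =>
    intro m
    refine cancel detR3 (gen_mem (by simp)) (gen_mem (by simp)) detR1 (NN_B _ _ _) ?_
    rw [sub_add_cancel]
    exact ih _

theorem NN_mem (x y : ℤ) : ∀ m, NN x y m ∈ GG := by
  induction x using Int.induction_on with
  | zero => exact NN_mem1 y
  | succ k ih =>
    intro m
    have := NN_A k y (m - k + 3 * y)
    rw [show m - (k : ℤ) + 3 * y + k - 3 * y = m by ring] at this
    rw [← this]
    exact GG.mul_mem (ih _) (GG.mul_mem (gen_mem (by simp)) (gen_mem (by simp)))
  | pred k ih =>
    intro m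
    refine cancel detR2 (gen_mem (by simp)) (gen_mem (by simp)) detR1 (NN_A _ _ _) ?_
    rw [sub_add_cancel]
    exact ih _

theorem conj_mul_self (p q : ℤ) :
    (starRingEnd ℂ) ((p : ℂ) + q * ω₇) * ((p : ℂ) + q * ω₇) =
      ((p * p + p * q + 2 * q * q : ℤ) : ℂ) := by
  have h := isq7_sq
  simp only [map_add, map_mul, map_intCast, conj_om]
  simp only [om_eq]
  push_cast
  linear_combination (-(q : ℂ) * q / 4) * h

theorem unit_O7 {a g : ℂ} (ha : inO7 a) (hg : inO7 g) (h : (starRingEnd ℂ) a * g = 1) :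
    (a = 1 ∧ g = 1) ∨ (a = -1 ∧ g = -1) := by
  obtain ⟨p, q, rfl⟩ := ha
  obtain ⟨r, t, rfl⟩ := hg
  have h1 := conj_mul_self p q
  have h2 := conj_mul_self r t
  have h' := congrArg (starRingEnd ℂ) h
  rw [map_mul, Complex.conj_conj, map_one] at h'
  have h3 : (((p * p + p * q + 2 * q * q) * (r * r + r * t + 2 * t * t) : ℤ) : ℂ) = ((1 : ℤ) : ℂ) := by
    rw [Int.cast_mul, ← h1, ← h2, mul_mul_mul_comm, mul_comm ((starRingEnd ℂ) ((p : ℂ) + q * ω₇)), mul_comm ((p : ℂ) + q * ω₇),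
      mul_mul_mul_comm, mul_comm (_ * _)]
    push_cast
    linear_combination (((p : ℂ) + q * ω₇) * (starRingEnd ℂ) ((r : ℂ) + t * ω₇)) * h + h'
  have h4 := Int.cast_injective h3
  have h5 : p * p + p * q + 2 * q * q = 1 := by
    rcases Int.eq_one_or_neg_one_of_mul_eq_one h4 with h | h
    · exact h
    · nlinarith [sq_nonneg (2 * p + q), sq_nonneg q]
  have hq : q = 0 := by
    have : q < 1 := by nlinarith [sq_nonneg (2 * p + q)]
    have : -1 < q := by nlinarith [sq_nonneg (2 * p + q)]
    lia
  subst hq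
  have hp : p = 1 ∨ p = -1 := by
    apply Int.eq_one_or_neg_one_of_mul_eq_one (v := p); linarith
  rcases hp with rfl | rfl
  · left; simp at h ⊢; exact h
  · right; simp at h ⊢; linear_combination -h

theorem mem_of_normalized {b c d e : ℂ} (hd : d = 1 ∨ d = -1) (he : inO7 e)
    (hc : inO7 (isq7 * c)) (h1 : (starRingEnd ℂ) d * e + (starRingEnd ℂ) b = 0)
    (h2 : c + (starRingEnd ℂ) e * e + (starRingEnd ℂ) c = 0) :
    (!![1, b, c; 0, d, e; 0, 0, 1] : Matrix (Fin 3) (Fin 3) ℂ) ∈ GG := by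
  obtain ⟨x, y, rfl⟩ := he
  obtain ⟨p, q, hpq⟩ := hc
  have hs := isq7_sq
  have hc : c = -((p : ℂ) + q * ω₇) * isq7 / 7 := by
    linear_combination (-isq7 / 7) * hpq + (c / 7) * hs
  have hb := congrArg (starRingEnd ℂ) h1
  simp only [map_add, map_mul, Complex.conj_conj, map_zero, map_intCast, conj_om] at hb
  rw [conj_mul_self, hc] at h2
  simp only [map_add, map_mul, map_neg, map_div₀, map_intCast, conj_om, conj_isq7, map_ofNat] at h2
  simp only [om_eq] at h2
  have hq : q = -(x * x + x * y + 2 * y * y) := by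
    have : ((q : ℤ) : ℂ) = ((-(x * x + x * y + 2 * y * y) : ℤ) : ℂ) := by
      push_cast at h2 ⊢
      linear_combination h2 + (q : ℂ) / 7 * hs
    exact Int.cast_injective this
  subst hq
  have key : (!![1, b, c; 0, d, (x : ℂ) + y * ω₇; 0, 0, 1] : Matrix (Fin 3) (Fin 3) ℂ) = NN x y p ∨
     (!![1, b, c; 0, d, (x : ℂ) + y * ω₇; 0, 0, 1] : Matrix (Fin 3) (Fin 3) ℂ) = NN x y p * R₁ := by
    rcases hd with rfl | rfl
    · left
      ext i j
      fin_cases i <;> fin_cases j <;> simp [NN, hc, om_eq]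
      · linear_combination hb
      · left; ring
    · right
      ext i j
      fin_cases i <;> fin_cases j <;>
        simp [NN, hc, om_eq, R₁, Matrix.mul_apply, Fin.sum_univ_three]
      · linear_combination hb
      · left; ring
  rcases key with h | h <;> rw [h]
  · exact NN_mem _ _ _
  · exact GG.mul_mem (NN_mem _ _ _) (gen_mem (by simp))

theorem inO7_neg {z : ℂ} (h : inO7 z) : inO7 (-z) := by
  obtain ⟨a, b, rfl⟩ := h
  exact ⟨-a, -b, by push_cast; ring⟩

/-- The stabilizer of `q_∞` in `Γ_s^(7)` is generated, modulo `±I`, by `R₁, R₂, R₃, T`. -/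
theorem gammaS7_stabilizer_generated (M : Matrix (Fin 3) (Fin 3) ℂ) (hM : GammaS7 M)
    (h21 : M 1 0 = 0) (h31 : M 2 0 = 0) :
    ∃ (ε : ℂ) (L : List (Matrix (Fin 3) (Fin 3) ℂ)),
      (ε = 1 ∨ ε = -1) ∧
      (∀ A ∈ L, A ∈ ({R₁, R₂, R₃, T, R₁⁻¹, R₂⁻¹, R₃⁻¹, T⁻¹} :
        Set (Matrix (Fin 3) (Fin 3) ℂ))) ∧
      M = ε • L.prod := by
  obtain ⟨⟨-, hJ⟩, ha, -, hd, he, hg, hc, -, -, -⟩ := hM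
  have E := fun i j => congrFun (congrFun hJ i) j
  have e01 := E 0 1
  have e02 := E 0 2
  have e11 := E 1 1
  have e12 := E 1 2
  have e22 := E 2 2
  simp [matJ, Matrix.mul_apply, Fin.sum_univ_three, h21, h31] at e01 e02 e11 e12 e22
  have hu := unit_O7 ha hg e02
  have hf : M 2 1 = 0 := by
    rcases e01 with h | h
    · rw [h] at e02; simp at e02
    · exact h
  simp only [hf, map_zero, zero_mul, mul_zero, zero_add, add_zero] at e11 e12 e22
  have hdd : M 1 1 = 1 ∨ M 1 1 = -1 := (unit_O7 hd hd e11).imp And.left And.left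
  have fin : ∀ ε : ℂ, (ε = 1 ∨ ε = -1) → ε • M ∈ GG → ∃ (ε : ℂ) (L : List (Matrix (Fin 3) (Fin 3) ℂ)),
      (ε = 1 ∨ ε = -1) ∧
      (∀ A ∈ L, A ∈ ({R₁, R₂, R₃, T, R₁⁻¹, R₂⁻¹, R₃⁻¹, T⁻¹} :
        Set (Matrix (Fin 3) (Fin 3) ℂ))) ∧
      M = ε • L.prod := by
    intro ε hε hm
    obtain ⟨L, hL, hp⟩ := Submonoid.exists_list_of_mem_closure hm
    refine ⟨ε, L, hε, hL, ?_⟩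
    rw [hp, smul_smul]
    rcases hε with rfl | rfl <;> simp
  rcases hu with ⟨h0, h2⟩ | ⟨h0, h2⟩
  · apply fin 1 (Or.inl rfl)
    have : (1 : ℂ) • M = !![1, M 0 1, M 0 2; 0, M 1 1, M 1 2; 0, 0, 1] := by
      ext i j
      fin_cases i <;> fin_cases j <;> simp [h0, h2, hf, h21, h31]
    rw [this]
    simp only [h2, map_one] at e12 e22
    exact mem_of_normalized hdd he hc (by linear_combination e12) (by linear_combination e22)
  · apply fin (-1) (Or.inr rfl)
    have : (-1 : ℂ) • M = !![1, -M 0 1, -M 0 2; 0, -M 1 1, -M 1 2; 0, 0, 1] := by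
      ext i j
      fin_cases i <;> fin_cases j <;> simp [h0, h2, hf, h21, h31]
    rw [this]
    simp only [h2, map_one, map_neg] at e12 e22
    refine mem_of_normalized ?_ (inO7_neg he) (by rw [mul_neg]; exact inO7_neg hc) ?_ ?_
    · rcases hdd with h | h <;> simp [h]
    · simp only [map_neg]; linear_combination e12
    · simp only [map_neg]; linear_combination e22
end
end
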